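/- arXiv:1805.02018 — 6 statements merged into one kernel-verified Lean document; each statement's English description precedes it below -/
import Mathlib

section
/- Let X be a complex vector space and 𝔔 a Hermitian form on X. Let V ⊆ X be a subspace with dim X/V < ∞ such that V^{𝔔𝔔} = V + ker 𝔔, and assume that both m⁻(𝔔) and m⁻(𝔔|_{V^𝔔}) are finite. Then m⁻(𝔔) − m⁻(𝔔|_V) = dim((V ∩ V^𝔔 + ker 𝔔)/ker 𝔔) + m⁻(𝔔|_{V^𝔔}). -/
open Module Submodule

noncomputable section

variable {X : Type*} [AddCommGroup X] [Module ℂ X]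

/-- The `Q`-orthogonal complement (polar) `V^𝔔` of a subspace `V` with respect to a
sesquilinear form `Q` (conjugate-linear in the first variable). -/
def qPolar (Q : X →ₗ⋆[ℂ] X →ₗ[ℂ] ℂ) (V : Submodule ℂ X) : Submodule ℂ X where
  carrier := {x | ∀ v ∈ V, Q x v = 0}
  add_mem' := by
    intro a b ha hb v hv
    simp only [map_add, LinearMap.add_apply, ha v hv, hb v hv, add_zero]
  zero_mem' := by
    intro v hv
    simp
  smul_mem' := by
    intro c x hx v hv
    simp only [LinearMap.map_smulₛₗ, LinearMap.smul_apply, hx v hv, smul_zero]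

/-- The kernel of the form `Q`, i.e. `X^𝔔`. -/
def qKer (Q : X →ₗ⋆[ℂ] X →ₗ[ℂ] ℂ) : Submodule ℂ X := qPolar Q ⊤

/-- The Morse index `m⁻(𝔔|_V)`: the supremum of dimensions of subspaces of `V`
on which `Q` is negative definite, as an extended natural number. -/
def negIdx (Q : X →ₗ⋆[ℂ] X →ₗ[ℂ] ℂ) (V : Submodule ℂ X) : ℕ∞ :=
  sSup {k : ℕ∞ | ∃ W : Submodule ℂ X, W ≤ V ∧ FiniteDimensional ℂ W ∧
    (∀ x ∈ W, x ≠ 0 → (Q x x).re < 0) ∧ k = (Module.finrank ℂ W : ℕ∞)}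

lemma aux_mem_polar (Q : X →ₗ⋆[ℂ] X →ₗ[ℂ] ℂ) (V : Submodule ℂ X) (x : X) :
    x ∈ qPolar Q V ↔ ∀ v ∈ V, Q x v = 0 := Iff.rfl

lemma aux_symm (Q : X →ₗ⋆[ℂ] X →ₗ[ℂ] ℂ)
    (hQ : ∀ x y, (starRingEnd ℂ) (Q x y) = Q y x) {x y : X} (h : Q x y = 0) : Q y x = 0 := by
  rw [← hQ, h, map_zero]

lemma aux_add (Q : X →ₗ⋆[ℂ] X →ₗ[ℂ] ℂ)
    (hQ : ∀ x y, (starRingEnd ℂ) (Q x y) = Q y x) {x y : X} (h : Q x y = 0) :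
    Q (x + y) (x + y) = Q x x + Q y y := by
  simp [h, aux_symm Q hQ h]

lemma aux_le (Q : X →ₗ⋆[ℂ] X →ₗ[ℂ] ℂ) (V W : Submodule ℂ X) (h1 : W ≤ V)
    (h2 : FiniteDimensional ℂ W) (h3 : ∀ x ∈ W, x ≠ 0 → (Q x x).re < 0) :
    (Module.finrank ℂ W : ℕ∞) ≤ negIdx Q V :=
  le_sSup ⟨W, h1, h2, h3, rfl⟩

lemma aux_mono (Q : X →ₗ⋆[ℂ] X →ₗ[ℂ] ℂ) (V : Submodule ℂ X) : negIdx Q V ≤ negIdx Q ⊤ := by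
  apply sSup_le_sSup
  rintro k ⟨W, _, h⟩
  exact ⟨W, le_top, h⟩

/-- Cauchy-Schwarz, degenerate case. -/
lemma aux_cs (Q : X →ₗ⋆[ℂ] X →ₗ[ℂ] ℂ)
    (hQ : ∀ x y, (starRingEnd ℂ) (Q x y) = Q y x) (S : Submodule ℂ X)
    (hS : ∀ x ∈ S, 0 ≤ (Q x x).re) {n y : X} (hn : n ∈ S) (hy : y ∈ S)
    (h0 : (Q n n).re ≤ 0) : Q n y = 0 := by
  by_contra hq
  set q := Q n y with hqd
  have hpos : 0 < Complex.normSq q := Complex.normSq_pos.2 hq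
  have him : (Q n n).im = 0 := by
    have := congrArg Complex.im (hQ n n)
    simp at this; linarith
  have hnn : Q n n = 0 := by
    apply Complex.ext
    · exact le_antisymm h0 (hS n hn)
    · exact him
  have key : ∀ t : ℝ, 0 ≤ 2 * t * Complex.normSq q + (Q y y).re := by
    intro t
    have h := hS (((t : ℂ) * q) • n + y) (S.add_mem (S.smul_mem _ hn) hy)
    have e : Q (((t : ℂ) * q) • n + y) (((t : ℂ) * q) • n + y)
        = (t : ℂ) * (starRingEnd ℂ q * q) + (t : ℂ) * (q * starRingEnd ℂ q) + Q y y := by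
      simp only [map_add, LinearMap.add_apply, LinearMap.map_smulₛₗ, LinearMap.smul_apply,
        smul_eq_mul, map_mul, Complex.conj_ofReal, hnn, ← hQ n y, ← hqd, RingHom.id_apply]
      ring
    rw [e, mul_comm (starRingEnd ℂ q) q, Complex.mul_conj] at h
    simp only [← Complex.ofReal_mul, Complex.add_re, Complex.ofReal_re] at h
    linarith
  have h := key (-((Q y y).re + 1) / (2 * Complex.normSq q))
  have e : 2 * (-((Q y y).re + 1) / (2 * Complex.normSq q)) * Complex.normSq q
      = -((Q y y).re + 1) := by
    field_simp
  rw [e] at h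
  linarith

/-- evaluation against a finite family -/
def evalMap (Q : X →ₗ⋆[ℂ] X →ₗ[ℂ] ℂ) {n : ℕ} (e : Fin n → X) : X →ₗ[ℂ] (Fin n → ℂ) :=
  LinearMap.pi fun i => Q (e i)

lemma evalMap_zero (Q : X →ₗ⋆[ℂ] X →ₗ[ℂ] ℂ) {n : ℕ} (e : Fin n → X) (x : X) :
    evalMap Q e x = 0 ↔ ∀ i, Q (e i) x = 0 := by
  simp [evalMap, funext_iff]

/-- the functional `Q · x` vanishes on the span. -/
lemma aux_span (Q : X →ₗ⋆[ℂ] X →ₗ[ℂ] ℂ) (S : Set X) (x : X)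
    (h : ∀ s ∈ S, Q s x = 0) : ∀ y ∈ Submodule.span ℂ S, Q y x = 0 := by
  intro y hy
  induction hy using Submodule.span_induction with
  | mem s hs => exact h s hs
  | zero => simp
  | add a b _ _ ha hb => simp [ha, hb]
  | smul c a _ ha => simp [ha]

lemma exists_evalMap (Q : X →ₗ⋆[ℂ] X →ₗ[ℂ] ℂ) (A : Submodule ℂ X) [FiniteDimensional ℂ A] :
    ∃ φ : X →ₗ[ℂ] (Fin (finrank ℂ A) → ℂ), ∀ x, φ x = 0 ↔ ∀ a ∈ A, Q a x = 0 := by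
  let b := Module.finBasis ℂ A
  refine ⟨evalMap Q (fun i => (b i : X)), fun x => ?_⟩
  rw [evalMap_zero]
  constructor
  · intro h a ha
    apply aux_span Q (Set.range fun i => (b i : X)) x
    · rintro _ ⟨i, rfl⟩; exact h i
    · have h1 : Submodule.span ℂ (Set.range fun i => (b i : X)) = A := by
        have : (Set.range fun i => (b i : X)) = A.subtype '' Set.range b := by
          rw [← Set.range_comp]; rfl
        rw [this, Submodule.span_image, b.span_eq]; simp
      rw [h1]; exact ha
  · intro h i
    exact h _ (b i).2

lemma aux_split (Q : X →ₗ⋆[ℂ] X →ₗ[ℂ] ℂ) (A : Submodule ℂ X) [FiniteDimensional ℂ A]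
    (hA : ∀ x ∈ A, x ≠ 0 → (Q x x).re < 0) (x : X) :
    ∃ a ∈ A, ∀ b ∈ A, Q b (x - a) = 0 := by
  obtain ⟨φ, hφ⟩ := exists_evalMap Q A
  have hinj : Function.Injective (φ.domRestrict A) := by
    rw [← LinearMap.ker_eq_bot, LinearMap.ker_eq_bot']
    intro m hm
    by_contra hne
    have h1 := (hφ m).1 hm m m.2
    have h2 := hA m m.2 (by simpa using hne)
    rw [h1] at h2; simp at h2
  have hsurj : Function.Surjective (φ.domRestrict A) :=
    (LinearMap.injective_iff_surjective_of_finrank_eq_finrank (by simp)).1 hinj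
  obtain ⟨a, ha⟩ := hsurj (φ x)
  refine ⟨a, a.2, (hφ _).1 ?_⟩
  rw [map_sub, ← ha]; simp

lemma exists_max (Q : X →ₗ⋆[ℂ] X →ₗ[ℂ] ℂ)
    (hQ : ∀ x y, (starRingEnd ℂ) (Q x y) = Q y x) (V : Submodule ℂ X) (hV : negIdx Q V ≠ ⊤) :
    ∃ A : Submodule ℂ X, A ≤ V ∧ FiniteDimensional ℂ A ∧
      (∀ x ∈ A, x ≠ 0 → (Q x x).re < 0) ∧ negIdx Q V = (finrank ℂ A : ℕ∞) ∧
      ∀ x ∈ V, (∀ a ∈ A, Q a x = 0) → 0 ≤ (Q x x).re := by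
  have hne : {k : ℕ∞ | ∃ W : Submodule ℂ X, W ≤ V ∧ FiniteDimensional ℂ W ∧
    (∀ x ∈ W, x ≠ 0 → (Q x x).re < 0) ∧ k = (Module.finrank ℂ W : ℕ∞)}.Nonempty :=
    ⟨_, ⊥, bot_le, inferInstance, by
      intro x hx h; exact absurd ((Submodule.mem_bot ℂ).1 hx) h, rfl⟩
  haveI := hne.to_subtype
  obtain ⟨A, hAV, hAf, hA, hk⟩ := ENat.sSup_mem_of_nonempty_of_lt_top (lt_top_iff_ne_top.2 hV)
  refine ⟨A, hAV, hAf, hA, hk, ?_⟩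
  intro x hx hxA
  by_contra hlt
  push Not at hlt
  have hx0 : x ≠ 0 := by rintro rfl; simp at hlt
  have hdis : A ⊓ Submodule.span ℂ {x} = ⊥ := by
    rw [Submodule.eq_bot_iff]
    rintro y ⟨hy, hy'⟩
    obtain ⟨c, rfl⟩ := Submodule.mem_span_singleton.1 hy'
    by_contra hc
    have := hxA _ hy
    simp only [LinearMap.map_smulₛₗ, LinearMap.smul_apply, smul_eq_mul, mul_eq_zero] at this
    rcases this with h | h
    · apply hc
      have : c = 0 := by simpa using h
      simp [this]
    · rw [h] at hlt; simp at hlt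
  have hle := aux_le Q V (A ⊔ Submodule.span ℂ {x})
    (sup_le hAV (by simpa using hx)) inferInstance (by
      intro y hy hy0
      obtain ⟨a, ha, z, hz, rfl⟩ := Submodule.mem_sup.1 hy
      obtain ⟨c, rfl⟩ := Submodule.mem_span_singleton.1 hz
      rw [aux_add Q hQ (by simp [hxA a ha])]
      have hcc : (Q (c • x) (c • x)).re = Complex.normSq c * (Q x x).re := by
        have : Q (c • x) (c • x) = (c * starRingEnd ℂ c) * Q x x := by
          simp; ring
        rw [this, Complex.mul_conj, Complex.re_ofReal_mul]
      rw [Complex.add_re, hcc]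
      by_cases ha0 : a = 0
      · have hc0 : c ≠ 0 := by rintro rfl; simp [ha0] at hy0
        have := mul_neg_of_pos_of_neg (Complex.normSq_pos.2 hc0) hlt
        simpa [ha0] using this
      · have h1 := hA a ha ha0
        have h2 := mul_nonpos_of_nonneg_of_nonpos (Complex.normSq_nonneg c) hlt.le
        linarith)
  have hfr := Submodule.finrank_sup_add_finrank_inf_eq A (Submodule.span ℂ {x})
  rw [hdis, finrank_bot, finrank_span_singleton hx0] at hfr
  have hk' : negIdx Q V = (finrank ℂ A : ℕ∞) := hk
  rw [hk'] at hle
  have : finrank ℂ ↥(A ⊔ Submodule.span ℂ {x}) ≤ finrank ℂ A := by exact_mod_cast hle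
  omega

/-- A nonpositive subspace meeting the kernel trivially has dimension at most the index. -/
lemma aux_nonpos (Q : X →ₗ⋆[ℂ] X →ₗ[ℂ] ℂ)
    (hQ : ∀ x y, (starRingEnd ℂ) (Q x y) = Q y x) (hfin : negIdx Q ⊤ ≠ ⊤)
    (N : Submodule ℂ X) [FiniteDimensional ℂ N] (hN : ∀ x ∈ N, (Q x x).re ≤ 0)
    (hK : ∀ x ∈ N, x ∈ qKer Q → x = 0) : (finrank ℂ N : ℕ∞) ≤ negIdx Q ⊤ := by
  obtain ⟨A, -, hAf, hA, hk, hmax⟩ := exists_max Q hQ ⊤ hfin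
  rw [hk]
  norm_cast
  by_contra hlt
  push Not at hlt
  obtain ⟨φ, hφ⟩ := exists_evalMap Q A
  have hker : LinearMap.ker (φ.domRestrict N) ≠ ⊥ :=
    LinearMap.ker_ne_bot_of_finrank_lt (by simpa using hlt)
  obtain ⟨n, hn, hn0⟩ := Submodule.exists_mem_ne_zero_of_ne_bot hker
  apply hn0
  have hnA := (hφ n).1 hn
  apply Subtype.ext
  refine hK n n.2 ?_
  intro y _
  obtain ⟨a, ha, hy⟩ := aux_split Q A hA y
  have h1 : Q n a = 0 := aux_symm Q hQ (hnA a ha)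
  have h2 : Q n (y - a) = 0 :=
    aux_cs Q hQ (LinearMap.ker φ) (fun x hx => hmax x trivial ((hφ x).1 hx))
      (LinearMap.mem_ker.2 ((hφ _).2 hnA)) (LinearMap.mem_ker.2 ((hφ _).2 hy)) (hN n n.2)
  rw [map_sub, h1, sub_zero] at h2
  exact h2

lemma aux_ker_le (Q : X →ₗ⋆[ℂ] X →ₗ[ℂ] ℂ) (V : Submodule ℂ X) : qKer Q ≤ qPolar Q V :=
  fun _ hx v _ => hx v trivial

lemma exists_lift (K U : Submodule ℂ X) [FiniteDimensional ℂ (U.map K.mkQ)] :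
    ∃ D : Submodule ℂ X, D ≤ U ∧ FiniteDimensional ℂ D ∧
      finrank ℂ D = finrank ℂ (U.map K.mkQ) ∧ D ⊓ K = ⊥ ∧ U ≤ D ⊔ K := by
  obtain ⟨g, hg⟩ := LinearMap.exists_rightInverse_of_surjective
    (K.mkQ.submoduleMap U) (LinearMap.range_eq_top.2 (LinearMap.submoduleMap_surjective _ _))
  have hg' : ∀ z, K.mkQ (g z : X) = z := fun z => by
    have := LinearMap.congr_fun hg z
    exact congrArg Subtype.val this
  let f : U.map K.mkQ →ₗ[ℂ] X := U.subtype ∘ₗ g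
  have hf : Function.Injective f := by
    intro a b h
    have h' : (g a : X) = g b := h
    apply Subtype.ext
    rw [← hg' a, ← hg' b, h']
  refine ⟨LinearMap.range f, ?_, inferInstance, LinearMap.finrank_range_of_inj hf, ?_, ?_⟩
  · rintro _ ⟨z, rfl⟩; exact (g z).2
  · rw [Submodule.eq_bot_iff]
    rintro _ ⟨⟨z, rfl⟩, hz⟩
    have h1 : K.mkQ (f z) = 0 := by simpa using hz
    have h2 : K.mkQ (f z) = z := hg' z
    have : z = 0 := Subtype.ext (by rw [← h2, h1]; rfl)
    rw [this, map_zero]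
  · intro u hu
    let z : U.map K.mkQ := ⟨K.mkQ u, Submodule.mem_map_of_mem hu⟩
    refine Submodule.mem_sup.2 ⟨f z, ⟨z, rfl⟩, u - f z, ?_, by abel⟩
    have h2 : K.mkQ (f z) = K.mkQ u := hg' z
    rw [← Submodule.Quotient.mk_eq_zero]
    change K.mkQ (u - f z) = 0
    rw [map_sub, h2, sub_self]

lemma aux_finite (Q : X →ₗ⋆[ℂ] X →ₗ[ℂ] ℂ)
    (hQ : ∀ x y, (starRingEnd ℂ) (Q x y) = Q y x)
    (V : Submodule ℂ X) (hcodim : Module.Finite ℂ (X ⧸ V)) :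
    FiniteDimensional ℂ ((qPolar Q V).map (qKer Q).mkQ) := by
  have hT : FiniteDimensional ℂ ((⊤ : Submodule ℂ X).map V.mkQ) := inferInstance
  obtain ⟨C, -, hC, -, -, hCV⟩ := exists_lift V ⊤
  obtain ⟨φ, hφ⟩ := exists_evalMap Q C
  have hker : qPolar Q V ⊓ LinearMap.ker φ ≤ qKer Q := by
    rintro x ⟨hx, hx'⟩ y _
    obtain ⟨c, hc, v, hv, rfl⟩ := Submodule.mem_sup.1 (hCV (Submodule.mem_top (x := y)))
    rw [map_add, hx v hv, aux_symm Q hQ ((hφ x).1 hx' c hc), add_zero]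
  have hle : qKer Q ≤ LinearMap.ker φ := by
    intro x hx
    exact (hφ x).2 fun c _ => aux_symm Q hQ (hx c trivial)
  let ψ := ((qKer Q).liftQ φ hle).domRestrict ((qPolar Q V).map (qKer Q).mkQ)
  have hψ : Function.Injective ψ := by
    rw [← LinearMap.ker_eq_bot, LinearMap.ker_eq_bot']
    rintro ⟨_, x, hx, rfl⟩ h
    apply Subtype.ext
    have h' : φ x = 0 := h
    exact (Submodule.Quotient.mk_eq_zero _).2 (hker ⟨hx, h'⟩)
  exact FiniteDimensional.of_injective ψ hψ

lemma aux_codim (Q : X →ₗ⋆[ℂ] X →ₗ[ℂ] ℂ)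
    (hQ : ∀ x y, (starRingEnd ℂ) (Q x y) = Q y x)
    (V : Submodule ℂ X) (hcodim : Module.Finite ℂ (X ⧸ V))
    (hVQQ : qPolar Q (qPolar Q V) = V ⊔ qKer Q) :
    ∃ E : Submodule ℂ X, FiniteDimensional ℂ E ∧
      finrank ℂ E ≤ finrank ℂ ((V ⊓ qPolar Q V).map (qKer Q).mkQ) ∧
      E ⊔ (V ⊔ qPolar Q V) = ⊤ := by
  haveI := aux_finite Q hQ V hcodim
  set U := qPolar Q V with hU
  set K := qKer Q with hKd
  have hKU : K ≤ U := aux_ker_le Q V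
  obtain ⟨C, hCU, hC, hCr, -, hCV⟩ := exists_lift K U
  obtain ⟨φ, hφ⟩ := exists_evalMap Q C
  have hker : LinearMap.ker φ = V ⊔ K := by
    rw [← hVQQ]
    ext x
    rw [LinearMap.mem_ker, hφ]
    constructor
    · intro h u hu
      obtain ⟨c, hc, k, hk, rfl⟩ := Submodule.mem_sup.1 (hCV hu)
      rw [map_add, aux_symm Q hQ (h c hc), aux_symm Q hQ (hk x trivial), add_zero]
    · intro h c hc
      exact aux_symm Q hQ (h c (hCU hc))
  have hle : K ≤ LinearMap.ker φ := hker ▸ le_sup_right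
  let ψ := (K.liftQ φ hle).domRestrict (U.map K.mkQ)
  have hrn := LinearMap.finrank_range_add_finrank_ker ψ
  have hrange : LinearMap.range ψ = U.map φ := by
    ext y
    constructor
    · rintro ⟨⟨_, x, hx, rfl⟩, rfl⟩
      exact ⟨x, hx, rfl⟩
    · rintro ⟨x, hx, rfl⟩
      exact ⟨⟨_, x, hx, rfl⟩, rfl⟩
  have hkk : finrank ℂ (LinearMap.ker ψ) = finrank ℂ ((V ⊓ U).map K.mkQ) := by
    have : (LinearMap.ker ψ).map (U.map K.mkQ).subtype = (V ⊓ U).map K.mkQ := by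
      ext y
      constructor
      · rintro ⟨⟨_, x, hx, rfl⟩, h, rfl⟩
        have h' : x ∈ LinearMap.ker φ := h
        rw [hker] at h'
        obtain ⟨v, hv, k, hk, rfl⟩ := Submodule.mem_sup.1 h'
        refine ⟨v, ⟨hv, ?_⟩, ?_⟩
        · have := U.sub_mem hx (hKU hk)
          simpa using this
        · have : K.mkQ k = 0 := (Submodule.Quotient.mk_eq_zero _).2 hk
          change K.mkQ v = K.mkQ (v + k)
          rw [map_add, this, add_zero]
      · rintro ⟨x, ⟨hx, hx'⟩, rfl⟩
        refine ⟨⟨_, x, hx', rfl⟩, ?_, rfl⟩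
        have h' : x ∈ LinearMap.ker φ := by rw [hker]; exact Submodule.mem_sup_left hx
        exact h'
    rw [← this]
    exact (Submodule.finrank_map_subtype_eq _ _).symm
  rw [hrange, hkk] at hrn
  have hVU : V ⊔ U = (U.map φ).comap φ := by
    rw [Submodule.comap_map_eq, hker, sup_comm V K, ← sup_assoc, sup_eq_left.2 hKU, sup_comm]
  let θ : (X ⧸ (V ⊔ U)) →ₗ[ℂ] ((Fin (finrank ℂ C) → ℂ) ⧸ U.map φ) :=
    Submodule.mapQ _ _ φ hVU.le
  have hθ : Function.Injective θ := by
    rw [← LinearMap.ker_eq_bot, LinearMap.ker_eq_bot']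
    intro m
    obtain ⟨x, rfl⟩ := Submodule.mkQ_surjective _ m
    intro h
    have h' : (Submodule.Quotient.mk (φ x) : (Fin (finrank ℂ C) → ℂ) ⧸ U.map φ) = 0 := h
    rw [Submodule.Quotient.mk_eq_zero] at h'
    refine (Submodule.Quotient.mk_eq_zero _).2 ?_
    rw [hVU]; exact h'
  have hfd : FiniteDimensional ℂ (X ⧸ (V ⊔ U)) := FiniteDimensional.of_injective θ hθ
  have h1 := LinearMap.finrank_le_finrank_of_injective hθ
  have h2 := Submodule.finrank_quotient_add_finrank (U.map φ)
  rw [finrank_fin_fun] at h2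
  obtain ⟨E, -, hE, hEr, -, hEV⟩ := exists_lift (V ⊔ U) ⊤
  refine ⟨E, hE, ?_, top_le_iff.1 hEV⟩
  have h3 : finrank ℂ E ≤ finrank ℂ (X ⧸ (V ⊔ U)) := by
    rw [hEr]; exact Submodule.finrank_le _
  omega

lemma aux_upper (P N W : Submodule ℂ X) [FiniteDimensional ℂ N] (hNP : N ⊔ P = ⊤)
    (hWP : W ⊓ P = ⊥) : finrank ℂ W ≤ finrank ℂ N := by
  have hs : Function.Surjective (P.mkQ.domRestrict N) := by
    intro m
    obtain ⟨x, rfl⟩ := Submodule.mkQ_surjective _ m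
    obtain ⟨n, hn, p, hp, rfl⟩ := Submodule.mem_sup.1 (hNP ▸ Submodule.mem_top (x := x))
    refine ⟨⟨n, hn⟩, ?_⟩
    have : P.mkQ p = 0 := (Submodule.Quotient.mk_eq_zero _).2 hp
    change P.mkQ n = P.mkQ (n + p)
    rw [map_add, this, add_zero]
  haveI : FiniteDimensional ℂ (X ⧸ P) := Module.Finite.of_surjective _ hs
  have h1 : finrank ℂ (X ⧸ P) ≤ finrank ℂ N := LinearMap.finrank_le_finrank_of_surjective hs
  have hi : Function.Injective (P.mkQ.domRestrict W) := by
    rw [← LinearMap.ker_eq_bot, LinearMap.ker_eq_bot']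
    intro m hm
    have hm' : (m : X) ∈ P := (Submodule.Quotient.mk_eq_zero _).1 hm
    have : (m : X) ∈ W ⊓ P := ⟨m.2, hm'⟩
    rw [hWP] at this
    exact Subtype.ext ((Submodule.mem_bot ℂ).1 this)
  exact (LinearMap.finrank_le_finrank_of_injective hi).trans h1

/-- Abstract relative Morse index theorem:
`m⁻(𝔔) − m⁻(𝔔|_V) = dim((V ∩ V^𝔔 + ker 𝔔)/ker 𝔔) + m⁻(𝔔|_{V^𝔔})`. -/
theorem morse_index_relative
    (Q : X →ₗ⋆[ℂ] X →ₗ[ℂ] ℂ)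
    (hQ : ∀ x y, (starRingEnd ℂ) (Q x y) = Q y x)
    (V : Submodule ℂ X) (hcodim : Module.Finite ℂ (X ⧸ V))
    (hVQQ : qPolar Q (qPolar Q V) = V ⊔ qKer Q)
    (hfin : negIdx Q ⊤ ≠ ⊤)
    (hfin' : negIdx Q (qPolar Q V) ≠ ⊤) :
    negIdx Q ⊤ = negIdx Q V
      + ((Module.finrank ℂ ↥((V ⊓ qPolar Q V).map (qKer Q).mkQ) : ℕ∞)
        + negIdx Q (qPolar Q V)) := by
  have hfinV : negIdx Q V ≠ ⊤ := ne_top_of_le_ne_top hfin (aux_mono Q V)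
  have hUf := aux_finite Q hQ V hcodim
  obtain ⟨E, hEf, hEr, hEV⟩ := aux_codim Q hQ V hcodim hVQQ
  have hKU : qKer Q ≤ qPolar Q V := aux_ker_le Q V
  obtain ⟨A, hAV, hAf, hA, hAk, hAmax⟩ := exists_max Q hQ V hfinV
  obtain ⟨B, hBU, hBf, hB, hBk, hBmax⟩ := exists_max Q hQ _ hfin'
  have hRf : FiniteDimensional ℂ ((V ⊓ qPolar Q V).map (qKer Q).mkQ) :=
    Submodule.finiteDimensional_of_le (Submodule.map_mono inf_le_right)
  obtain ⟨D, hDR, hDf, hDr, hDK, -⟩ := exists_lift (qKer Q) (V ⊓ qPolar Q V)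
  have orth : ∀ v ∈ V, ∀ u ∈ qPolar Q V, Q v u = 0 := fun v hv u hu => aux_symm Q hQ (hu v hv)
  apply le_antisymm
  · obtain ⟨W, -, hWf, hW, hWk, -⟩ := exists_max Q hQ ⊤ hfin
    rw [hWk, hAk, hBk]
    obtain ⟨φ, hφ⟩ := exists_evalMap Q A
    obtain ⟨χ, hχ⟩ := exists_evalMap Q B
    let P : Submodule ℂ X := (V ⊓ LinearMap.ker φ) ⊔ (qPolar Q V ⊓ LinearMap.ker χ)
    have hP : ∀ x ∈ P, 0 ≤ (Q x x).re := by
      intro x hx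
      obtain ⟨v, hv, u, hu, rfl⟩ := Submodule.mem_sup.1 hx
      rw [aux_add Q hQ (orth v hv.1 u hu.1), Complex.add_re]
      exact add_nonneg (hAmax v hv.1 ((hφ v).1 hv.2)) (hBmax u hu.1 ((hχ u).1 hu.2))
    have hNP : (A ⊔ B ⊔ E) ⊔ P = ⊤ := by
      rw [eq_top_iff, ← hEV]
      refine sup_le (le_sup_right.trans le_sup_left) (sup_le ?_ ?_)
      · intro v hv
        obtain ⟨a, ha, h⟩ := aux_split Q A hA v
        have h1 : v - a ∈ P := Submodule.mem_sup_left
          ⟨V.sub_mem hv (hAV ha), LinearMap.mem_ker.2 ((hφ _).2 h)⟩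
        have h2 : a ∈ A ⊔ B ⊔ E := Submodule.mem_sup_left (Submodule.mem_sup_left ha)
        have := Submodule.add_mem_sup h2 h1
        simpa using this
      · intro v hv
        obtain ⟨a, ha, h⟩ := aux_split Q B hB v
        have h1 : v - a ∈ P := Submodule.mem_sup_right
          ⟨Submodule.sub_mem _ hv (hBU ha), LinearMap.mem_ker.2 ((hχ _).2 h)⟩
        have h2 : a ∈ A ⊔ B ⊔ E := Submodule.mem_sup_left (Submodule.mem_sup_right ha)
        have := Submodule.add_mem_sup h2 h1
        simpa using this
    have hWP : W ⊓ P = ⊥ := by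
      rw [Submodule.eq_bot_iff]
      rintro x ⟨hx, hx'⟩
      by_contra h0
      exact absurd (hP x hx') (not_le.2 (hW x hx h0))
    have h := aux_upper P (A ⊔ B ⊔ E) W hNP hWP
    have h1 := Submodule.finrank_add_le_finrank_add_finrank (A ⊔ B) E
    have h2 := Submodule.finrank_add_le_finrank_add_finrank A B
    norm_cast
    omega
  · rw [hAk, hBk, ← hDr]
    -- expansion of the form on `A + B + D`
    have hexp : ∀ a ∈ A, ∀ b ∈ B, ∀ d ∈ D,
        Q (a + b + d) (a + b + d) = Q a a + Q b b := by
      intro a ha b hb d hd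
      have hd' := hDR hd
      rw [aux_add Q hQ, aux_add Q hQ (orth a (hAV ha) b (hBU hb)), orth d hd'.1 d hd'.2, add_zero]
      rw [map_add, LinearMap.add_apply, orth a (hAV ha) d hd'.2, zero_add]
      exact hBU hb d hd'.1
    have hAle : ∀ a ∈ A, (Q a a).re ≤ 0 := by
      intro a ha
      by_cases h : a = 0
      · simp [h]
      · exact (hA a ha h).le
    have hBle : ∀ a ∈ B, (Q a a).re ≤ 0 := by
      intro a ha
      by_cases h : a = 0
      · simp [h]
      · exact (hB a ha h).le
    have hz : ∀ a ∈ A, ∀ b ∈ B, ∀ d ∈ D, (Q (a + b + d) (a + b + d)).re = 0 →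
        a = 0 ∧ b = 0 := by
      intro a ha b hb d hd h
      rw [hexp a ha b hb d hd, Complex.add_re] at h
      have h1 := hAle a ha
      have h2 := hBle b hb
      constructor
      · by_contra h0
        have := hA a ha h0
        linarith
      · by_contra h0
        have := hB b hb h0
        linarith
    have hAB : A ⊓ B = ⊥ := by
      rw [Submodule.eq_bot_iff]
      rintro x ⟨hx, hx'⟩
      have := hz x hx (-x) (B.neg_mem hx') 0 D.zero_mem (by simp)
      exact this.1
    have hABD : (A ⊔ B) ⊓ D = ⊥ := by
      rw [Submodule.eq_bot_iff]
      rintro x ⟨hx, hx'⟩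
      obtain ⟨a, ha, b, hb, rfl⟩ := Submodule.mem_sup.1 hx
      have := hz a ha b hb (-(a + b)) (D.neg_mem hx') (by rw [add_neg_cancel]; simp)
      rw [this.1, this.2, add_zero]
    have h1 := Submodule.finrank_sup_add_finrank_inf_eq (A ⊔ B) D
    have h2 := Submodule.finrank_sup_add_finrank_inf_eq A B
    rw [hABD, finrank_bot] at h1
    rw [hAB, finrank_bot] at h2
    have h := aux_nonpos Q hQ hfin (A ⊔ B ⊔ D) (by
      intro x hx
      obtain ⟨y, hy, d, hd, rfl⟩ := Submodule.mem_sup.1 hx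
      obtain ⟨a, ha, b, hb, rfl⟩ := Submodule.mem_sup.1 hy
      rw [hexp a ha b hb d hd, Complex.add_re]
      exact add_nonpos (hAle a ha) (hBle b hb)) (by
      intro x hx hxK
      obtain ⟨y, hy, d, hd, rfl⟩ := Submodule.mem_sup.1 hx
      obtain ⟨a, ha, b, hb, rfl⟩ := Submodule.mem_sup.1 hy
      have h0 := hz a ha b hb d hd (by rw [hxK _ trivial]; simp)
      rw [h0.1, h0.2, zero_add, zero_add] at hxK ⊢
      have : d ∈ D ⊓ qKer Q := ⟨hd, hxK⟩
      rw [hDK] at this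
      exact (Submodule.mem_bot ℂ).1 this)
    refine le_trans ?_ h
    norm_cast
    omega
end
end

section
/- Let W be a linear subspace of ℝ^n, let 𝔔 be a symmetric bilinear (quadratic) form on W, and suppose ker 𝔔 = K₁ ⊕ K₂ is a direct sum decomposition of its kernel. If X ⊆ W is a subspace such that 𝔔(x,y) = 0 for all x, y ∈ X and X ∩ K₁ = {0}, then dim X ≤ m⁺(𝔔) + dim K₂. -/
open Module

noncomputable section

/-- `m⁺(𝔔)`: the dimension of a maximal subspace on which the symmetric bilinear
form `Q` is positive definite. -/
def posIdx {W : Type*} [AddCommGroup W] [Module ℝ W]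
    (Q : W →ₗ[ℝ] W →ₗ[ℝ] ℝ) : ℕ :=
  sSup {k : ℕ | ∃ P : Submodule ℝ W,
    (∀ x ∈ P, x ≠ 0 → 0 < Q x x) ∧ k = Module.finrank ℝ P}

/-- If `ker 𝔔 = K₁ ⊕ K₂` and `X` is a `𝔔`-isotropic subspace with `X ∩ K₁ = 0`,
then `dim X ≤ m⁺(𝔔) + dim K₂`. -/
theorem isotropic_dim_le_split (n : ℕ) (W : Submodule ℝ (Fin n → ℝ))
    (Q : W →ₗ[ℝ] W →ₗ[ℝ] ℝ) (hQ : ∀ x y, Q x y = Q y x)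
    (K₁ K₂ : Submodule ℝ W) (hsum : K₁ ⊔ K₂ = LinearMap.ker Q)
    (hdisj : K₁ ⊓ K₂ = ⊥)
    (X : Submodule ℝ W) (hX : ∀ x ∈ X, ∀ y ∈ X, Q x y = 0)
    (hXK : X ⊓ K₁ = ⊥) :
    Module.finrank ℝ X ≤ posIdx Q + Module.finrank ℝ K₂ := by
  classical
  set S := {k : ℕ | ∃ P : Submodule ℝ W,
    (∀ x ∈ P, x ≠ 0 → 0 < Q x x) ∧ k = Module.finrank ℝ P} with hS
  have hbdd : BddAbove S := by
    refine ⟨Module.finrank ℝ W, ?_⟩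
    rintro k ⟨P, -, rfl⟩
    exact Submodule.finrank_le P
  have hne : S.Nonempty := ⟨_, ⊥, fun x hx h0 => absurd ((Submodule.mem_bot ℝ).1 hx) h0, rfl⟩
  have hpos : posIdx Q = sSup S := rfl
  obtain ⟨P, hP, hPd⟩ : sSup S ∈ S := Nat.sSup_mem hne hbdd
  have hmax : ∀ P' : Submodule ℝ W, (∀ x ∈ P', x ≠ 0 → 0 < Q x x) →
      Module.finrank ℝ P' ≤ Module.finrank ℝ P := by
    intro P' h
    rw [← hPd]
    exact le_csSup hbdd ⟨P', h, rfl⟩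
  -- the form is nonpositive on the orthogonal complement of P
  have hneg : ∀ u : W, (∀ p ∈ P, Q u p = 0) → Q u u ≤ 0 := by
    intro u hu
    by_contra! hlt
    have huP : u ∉ P := fun h => hlt.ne' (hu u h)
    have hlt' : P < P ⊔ Submodule.span ℝ {u} := by
      refine lt_of_le_of_ne le_sup_left fun h => huP ?_
      rw [h]
      exact Submodule.mem_sup_right (Submodule.mem_span_singleton_self u)
    have h1 := Submodule.finrank_lt_finrank_of_lt hlt'
    have h2 := hmax (P ⊔ Submodule.span ℝ {u}) (by
      intro x hx hx0
      obtain ⟨p, hp, z, hz, rfl⟩ := Submodule.mem_sup.1 hx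
      obtain ⟨c, rfl⟩ := Submodule.mem_span_singleton.1 hz
      have e : Q (p + c • u) (p + c • u) = Q p p + c ^ 2 * Q u u := by
        simp only [map_add, map_smul, LinearMap.add_apply, LinearMap.smul_apply, smul_eq_mul,
          hu p hp, hQ p u]
        ring
      rw [e]
      by_cases hp0 : p = 0
      · have hc : c ≠ 0 := by
          rintro rfl
          simp [hp0] at hx0
        have : 0 < c ^ 2 := by positivity
        simp only [hp0, map_zero, zero_add]
        positivity
      · have := hP p hp hp0
        positivity)
    omega
  -- orthogonal decomposition
  have hdec : ∀ w : W, ∃ p ∈ P, ∀ q ∈ P, Q (w - p) q = 0 := by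
    intro w
    let g : P →ₗ[ℝ] Module.Dual ℝ P := (Q.domRestrict P).compr₂ LinearMap.id |>.compl₂ P.subtype
    have hg : ∀ p q : P, g p q = Q p q := fun p q => rfl
    have hinj : Function.Injective g := by
      rw [injective_iff_map_eq_zero]
      intro p hp
      by_contra h0
      have h1 := hP p p.2 (by simpa using h0)
      rw [← hg, hp] at h1
      simp at h1
    have hsurj := (LinearMap.injective_iff_surjective_of_finrank_eq_finrank (K := ℝ)
      (V := P) (V₂ := Module.Dual ℝ P) (f := g)
      (Subspace.dual_finrank_eq (K := ℝ) (V := P)).symm).1 hinj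
    obtain ⟨p, hp⟩ := hsurj ((Q w).comp P.subtype)
    refine ⟨p, p.2, fun q hq => ?_⟩
    have := LinearMap.congr_fun hp ⟨q, hq⟩
    rw [hg] at this
    simp only [LinearMap.comp_apply, Submodule.subtype_apply] at this
    rw [map_sub, LinearMap.sub_apply, this, sub_self]
  have hker : ∀ x ∈ X, (∀ p ∈ P, Q x p = 0) → x ∈ LinearMap.ker Q := by
    intro x hx hxP
    rw [LinearMap.mem_ker]
    ext1 w
    obtain ⟨p, hp, hu⟩ := hdec w
    generalize huw : w - p = u at hu
    have hw : w = u + p := by rw [← huw]; abel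
    have key : ∀ t : ℝ, Q u u + 2 * t * Q x u ≤ 0 := by
      intro t
      have h := hneg (u + t • x) (by
        intro q hq
        simp [hu q hq, hxP q hq])
      have e : Q (u + t • x) (u + t • x) = Q u u + 2 * t * Q x u := by
        simp only [map_add, map_smul, LinearMap.add_apply, LinearMap.smul_apply, smul_eq_mul,
          hX x hx x hx, hQ u x]
        ring
      rwa [e] at h
    have hxu : Q x u = 0 := by
      by_contra h0
      have h := key ((1 - Q u u) / (2 * Q x u))
      have e : 2 * ((1 - Q u u) / (2 * Q x u)) * Q x u = 1 - Q u u := by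
        field_simp
      rw [e] at h
      linarith
    rw [hw, map_add, hxu, hxP p hp]
    simp
  let f : X →ₗ[ℝ] Module.Dual ℝ P := (Q.domRestrict X).compl₂ P.subtype
  have hf : ∀ (x : X) (p : P), f x p = Q x p := fun x p => rfl
  have hrk := LinearMap.finrank_range_add_finrank_ker (K := ℝ) (V := X) (V₂ := Module.Dual ℝ P) f
  have hrange : Module.finrank ℝ (LinearMap.range f) ≤ Module.finrank ℝ P := by
    rw [← Subspace.dual_finrank_eq (K := ℝ) (V := P)]
    exact Submodule.finrank_le _
  set N : Submodule ℝ W := (LinearMap.ker f).map X.subtype with hN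
  have hNd : Module.finrank ℝ N = Module.finrank ℝ (LinearMap.ker f) :=
    Submodule.finrank_map_subtype_eq X _
  have hNX : N ≤ X := Submodule.map_subtype_le X _
  have hNker : N ≤ LinearMap.ker Q := by
    rintro _ ⟨x, hx, rfl⟩
    refine hker x x.2 fun p hp => ?_
    have := LinearMap.congr_fun (LinearMap.mem_ker.1 hx) ⟨p, hp⟩
    rwa [hf] at this
  have hNK : N ⊓ K₁ = ⊥ := le_bot_iff.1 (hXK ▸ inf_le_inf_right K₁ hNX)
  have h1 := Submodule.finrank_sup_add_finrank_inf_eq N K₁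
  rw [hNK, finrank_bot] at h1
  have h2 : Module.finrank ℝ ↥(N ⊔ K₁) ≤ Module.finrank ℝ ↥(K₁ ⊔ K₂) := by
    refine Submodule.finrank_mono (sup_le (hsum ▸ hNker) le_sup_left)
  have h3 := Submodule.finrank_add_le_finrank_add_finrank K₁ K₂
  rw [hpos, hPd]
  omega
end
end

section
/- Let M ∈ Sp(2n) and let Λ₁, Λ₂, Λ₃ be Lagrangian subspaces of (ℂ^{2n}, ω). Then, computing the left-hand triple index in (ℂ^{2n}⊕ℂ^{2n}, −ω⊕ω) and the right-hand one in (ℂ^{2n}, ω), one has i(Gr(M), Λ₁⊕Λ₂, Λ₁⊕Λ₃) = i(MΛ₁, Λ₂, Λ₃). -/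
open Matrix Module Submodule

noncomputable section

/-- `ℂ^{2n}`, indexed by `Fin n ⊕ Fin n` (the two `n`-blocks). -/
abbrev CV (n : ℕ) := (Fin n ⊕ Fin n) → ℂ

/-- The standard Hermitian inner product `⟨x,y⟩ = ∑ xᵢ conj(yᵢ)`. -/
def herm {m : Type*} [Fintype m] (x y : m → ℂ) : ℂ :=
  ∑ i, x i * (starRingEnd ℂ) (y i)

/-- The standard complex symplectic form `ω(x,y) = ⟨Jx, y⟩` on `ℂ^{2n}`,
where `J = [[0,-I],[I,0]]`. -/
def symForm (n : ℕ) (x y : CV n) : ℂ :=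
  herm ((Matrix.J (Fin n) ℂ).mulVec x) y

/-- The symplectic form `-ω ⊕ ω` on `ℂ^{2n} ⊕ ℂ^{2n}`. -/
def symForm2 (n : ℕ) (p q : CV n × CV n) : ℂ :=
  - symForm n p.1 q.1 + symForm n p.2 q.2

/-- A Lagrangian subspace of a complex symplectic space: `ω` vanishes on it and
it has (half) dimension `m`. -/
def IsLagrangian {X : Type*} [AddCommGroup X] [Module ℂ X]
    (w : X → X → ℂ) (m : ℕ) (Λ : Submodule ℂ X) : Prop :=
  (∀ x ∈ Λ, ∀ y ∈ Λ, w x y = 0) ∧ Module.finrank ℂ Λ = m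

/-- `m⁺(𝔔(α,β;κ))`: the dimension of a maximal subspace of `α ∩ (β + κ)` on which
the form `𝔔(x₁,x₂) = ω(y₁,z₂)` (with `x_j = y_j + z_j`, `y_j ∈ β`, `z_j ∈ κ`) is
positive definite. -/
def posInd {X : Type*} [AddCommGroup X] [Module ℂ X]
    (w : X → X → ℂ) (α β κ : Submodule ℂ X) : ℕ :=
  sSup {k : ℕ | ∃ P : Submodule ℂ X, P ≤ α ⊓ (β ⊔ κ) ∧
    (∀ x ∈ P, x ≠ 0 → ∀ y ∈ β, ∀ z ∈ κ, x = y + z → 0 < (w y z).re) ∧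
    k = Module.finrank ℂ P}

/-- The triple index `i(α,β,κ) = m⁺(𝔔(α,β;κ)) + dim(α∩κ) − dim(α∩β∩κ)`. -/
def tripleIdx {X : Type*} [AddCommGroup X] [Module ℂ X]
    (w : X → X → ℂ) (α β κ : Submodule ℂ X) : ℕ :=
  posInd w α β κ + Module.finrank ℂ ↥(α ⊓ κ) - Module.finrank ℂ ↥(α ⊓ β ⊓ κ)

theorem finrank_map_inj_aux {X Y : Type*} [AddCommGroup X] [Module ℂ X]
    [AddCommGroup Y] [Module ℂ Y] (f : Y →ₗ[ℂ] X) (hf : Function.Injective f)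
    (P : Submodule ℂ Y) : Module.finrank ℂ (P.map f) = Module.finrank ℂ P :=
  (LinearEquiv.finrank_eq (Submodule.equivMapOfInjective f hf P)).symm

theorem tripleIdx_aux_left_inv {n : ℕ} (M : Matrix (Fin n ⊕ Fin n) (Fin n ⊕ Fin n) ℝ)
    (hM : Mᵀ * Matrix.J (Fin n) ℝ * M = Matrix.J (Fin n) ℝ) :
    ∃ L : Matrix (Fin n ⊕ Fin n) (Fin n ⊕ Fin n) ℂ,
      L * M.map Complex.ofReal = 1 ∧ M.map Complex.ofReal * L = 1 := by
  have h : (-(Matrix.J (Fin n) ℝ) * Mᵀ * Matrix.J (Fin n) ℝ) * M = 1 := by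
    rw [Matrix.mul_assoc, Matrix.mul_assoc, ← Matrix.mul_assoc Mᵀ, hM, Matrix.neg_mul,
      Matrix.J_squared, neg_neg]
  have h2 := congrArg (fun A => A.map (Complex.ofRealHom)) h
  simp only [Matrix.map_mul] at h2
  rw [Matrix.map_one _ (map_zero _) (map_one _), ← Matrix.map_mul, ← Matrix.map_mul] at h2
  exact ⟨_, h2, mul_eq_one_comm.mp h2⟩

theorem posInd_transfer {X Y : Type*} [AddCommGroup X] [Module ℂ X]
    [AddCommGroup Y] [Module ℂ Y] (w : X → X → ℂ) (v : Y → Y → ℂ)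
    (α β κ : Submodule ℂ X) (α' β' κ' : Submodule ℂ Y)
    (f : Y →ₗ[ℂ] X) (hf : Function.Injective f)
    (hd : α ⊓ (β ⊔ κ) = (α' ⊓ (β' ⊔ κ')).map f)
    (hq : ∀ x ∈ α' ⊓ (β' ⊔ κ'),
      (∀ y ∈ β, ∀ z ∈ κ, f x = y + z → 0 < (w y z).re) ↔
      (∀ y ∈ β', ∀ z ∈ κ', x = y + z → 0 < (v y z).re)) :
    posInd w α β κ = posInd v α' β' κ' := by
  unfold posInd
  congr 1
  ext k
  constructor
  · rintro ⟨P, hP, hpos, rfl⟩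
    rw [hd] at hP
    have hPe : (P.comap f).map f = P :=
      Submodule.map_comap_eq_self (hP.trans LinearMap.map_le_range)
    have hle : P.comap f ≤ α' ⊓ (β' ⊔ κ') := by
      intro x hx
      obtain ⟨x', hx', he⟩ := hP hx
      rwa [← hf he]
    refine ⟨P.comap f, hle, ?_, ?_⟩
    · intro x hx hx0
      exact (hq x (hle hx)).1 (hpos (f x) hx (by
        intro h; exact hx0 (hf (by rw [h, map_zero]))))
    · conv_lhs => rw [← hPe]
      exact finrank_map_inj_aux f hf _
  · rintro ⟨P, hP, hpos, rfl⟩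
    refine ⟨P.map f, ?_, ?_, ?_⟩
    · rw [hd]; exact Submodule.map_mono hP
    · rintro _ ⟨x, hx, rfl⟩ hx0
      exact (hq x (hP hx)).2 (hpos x hx (by rintro rfl; exact hx0 (map_zero f)))
    · exact (finrank_map_inj_aux f hf _).symm

/-- `i(Gr(M), Λ₁⊕Λ₂, Λ₁⊕Λ₃) = i(MΛ₁, Λ₂, Λ₃)` for `M ∈ Sp(2n)` and Lagrangian
subspaces `Λ₁, Λ₂, Λ₃` of `(ℂ^{2n}, ω)`. -/
theorem tripleIdx_graph_eq (n : ℕ)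
    (M : Matrix (Fin n ⊕ Fin n) (Fin n ⊕ Fin n) ℝ)
    (hM : Mᵀ * Matrix.J (Fin n) ℝ * M = Matrix.J (Fin n) ℝ)
    (Λ₁ Λ₂ Λ₃ : Submodule ℂ (CV n))
    (h₁ : IsLagrangian (symForm n) n Λ₁)
    (h₂ : IsLagrangian (symForm n) n Λ₂)
    (h₃ : IsLagrangian (symForm n) n Λ₃) :
    tripleIdx (symForm2 n)
      (LinearMap.graph ((M.map Complex.ofReal).mulVecLin))
      (Λ₁.prod Λ₂) (Λ₁.prod Λ₃)
    = tripleIdx (symForm n)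
        (Λ₁.map ((M.map Complex.ofReal).mulVecLin)) Λ₂ Λ₃ := by
  obtain ⟨L, hLM, hML⟩ := tripleIdx_aux_left_inv M hM
  set N := M.map Complex.ofReal with hN
  have hL : ∀ x, L.mulVec (N.mulVec x) = x := fun x => by
    rw [Matrix.mulVec_mulVec, hLM, Matrix.one_mulVec]
  have hR : ∀ x, N.mulVec (L.mulVec x) = x := fun x => by
    rw [Matrix.mulVec_mulVec, hML, Matrix.one_mulVec]
  let f : CV n →ₗ[ℂ] CV n × CV n := L.mulVecLin.prod LinearMap.id
  have hfa : ∀ y, f y = (L.mulVec y, y) := fun y => rfl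
  have hf : Function.Injective f := fun a b h => congrArg Prod.snd h
  have key : ∀ K : Submodule ℂ (CV n), LinearMap.graph N.mulVecLin ⊓ Λ₁.prod K
      = (Λ₁.map N.mulVecLin ⊓ K).map f := by
    intro K
    ext ⟨a, b⟩
    simp only [Submodule.mem_inf, LinearMap.mem_graph_iff, Submodule.mem_prod, Submodule.mem_map,
      Matrix.mulVecLin_apply, hfa, Prod.mk.injEq]
    constructor
    · rintro ⟨rfl, ha, hb⟩
      exact ⟨_, ⟨⟨a, ha, rfl⟩, hb⟩, hL a, rfl⟩
    · rintro ⟨_, ⟨⟨x, hx, rfl⟩, hb⟩, h, rfl⟩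
      rw [hL] at h
      subst h
      exact ⟨rfl, hx, hb⟩
  have hsup : Λ₁.prod Λ₂ ⊔ Λ₁.prod Λ₃ = Λ₁.prod (Λ₂ ⊔ Λ₃) := by
    rw [Submodule.prod_sup_prod, sup_idem]
  have hinf : Λ₁.prod Λ₂ ⊓ Λ₁.prod Λ₃ = Λ₁.prod (Λ₂ ⊓ Λ₃) := by
    rw [Submodule.prod_inf_prod, inf_idem]
  unfold tripleIdx
  rw [inf_assoc, inf_assoc, hinf, key, key, finrank_map_inj_aux f hf, finrank_map_inj_aux f hf]
  congr 2
  refine posInd_transfer _ _ _ _ _ _ _ _ f hf (by rw [hsup, key]) ?_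
  rintro x ⟨⟨u, hu, rfl⟩, -⟩
  simp only [Matrix.mulVecLin_apply, hfa, hL]
  constructor
  · intro h y hy z hz he
    have := h (u, y) ⟨hu, hy⟩ (0, z) ⟨Λ₁.zero_mem, hz⟩ (by simp [he])
    simpa [symForm2, h₁.1 u hu 0 Λ₁.zero_mem] using this
  · rintro h ⟨y1, y2⟩ ⟨hy1, hy2⟩ ⟨z1, z2⟩ ⟨hz1, hz2⟩ he
    have := h y2 hy2 z2 hz2 (congrArg Prod.snd he)
    simpa [symForm2, h₁.1 y1 hy1 z1 hz1] using this
end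
end

section
/- Let M ∈ Sp(2n) and let Λ₁, Λ₂, Λ₃ be Lagrangian subspaces of (ℂ^{2n}, ω). Then, computing the left-hand triple index in (ℂ^{2n}⊕ℂ^{2n}, −ω⊕ω) and the right-hand one in (ℂ^{2n}, −ω), one has i(Gr(M), Λ₁⊕Λ₂, Λ₃⊕Λ₂) = i(M⁻¹Λ₂, Λ₁, Λ₃; −ω). -/
open Matrix Module Submodule

noncomputable section

theorem finrank_map_gr {X Y : Type*} [AddCommGroup X] [Module ℂ X] [AddCommGroup Y] [Module ℂ Y]
    (f : X →ₗ[ℂ] Y) (P : Submodule ℂ X) :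
    Module.finrank ℂ (P.map (LinearMap.prod LinearMap.id f)) = Module.finrank ℂ P := by
  have hinj : Function.Injective (LinearMap.prod LinearMap.id f) := by
    intro a b hab
    exact congrArg Prod.fst hab
  exact (LinearEquiv.finrank_eq (Submodule.equivMapOfInjective _ hinj P)).symm

/-- `i(Gr(M), Λ₁⊕Λ₂, Λ₃⊕Λ₂) = i(M⁻¹Λ₂, Λ₁, Λ₃; −ω)` for `M ∈ Sp(2n)` and
Lagrangian subspaces `Λ₁, Λ₂, Λ₃` of `(ℂ^{2n}, ω)`; the right-hand triple index
is computed with respect to `−ω`. -/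
theorem tripleIdx_graph_eq' (n : ℕ)
    (M : Matrix (Fin n ⊕ Fin n) (Fin n ⊕ Fin n) ℝ)
    (hM : Mᵀ * Matrix.J (Fin n) ℝ * M = Matrix.J (Fin n) ℝ)
    (Λ₁ Λ₂ Λ₃ : Submodule ℂ (CV n))
    (h₁ : IsLagrangian (symForm n) n Λ₁)
    (h₂ : IsLagrangian (symForm n) n Λ₂)
    (h₃ : IsLagrangian (symForm n) n Λ₃) :
    tripleIdx (symForm2 n)
      (LinearMap.graph ((M.map Complex.ofReal).mulVecLin))
      (Λ₁.prod Λ₂) (Λ₃.prod Λ₂)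
    = tripleIdx (fun x y => - symForm n x y)
        (Λ₂.comap ((M.map Complex.ofReal).mulVecLin)) Λ₁ Λ₃ := by
  set f := (M.map Complex.ofReal).mulVecLin with hf
  have e1 : LinearMap.graph f ⊓ Λ₃.prod Λ₂
      = (Λ₂.comap f ⊓ Λ₃).map (LinearMap.prod LinearMap.id f) := by
    ext ⟨a, b⟩
    simp only [Submodule.mem_inf, LinearMap.mem_graph_iff, Submodule.mem_prod, Submodule.mem_map,
      Submodule.mem_comap, LinearMap.prod_apply, Function.prod_apply, LinearMap.id_apply, Prod.mk.injEq]
    constructor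
    · rintro ⟨rfl, h3, h2⟩
      exact ⟨a, ⟨h2, h3⟩, rfl, rfl⟩
    · rintro ⟨x, ⟨h2, h3⟩, rfl, rfl⟩
      exact ⟨rfl, h3, h2⟩
  have e2 : LinearMap.graph f ⊓ Λ₁.prod Λ₂ ⊓ Λ₃.prod Λ₂
      = (Λ₂.comap f ⊓ Λ₁ ⊓ Λ₃).map (LinearMap.prod LinearMap.id f) := by
    ext ⟨a, b⟩
    simp only [Submodule.mem_inf, LinearMap.mem_graph_iff, Submodule.mem_prod, Submodule.mem_map,
      Submodule.mem_comap, LinearMap.prod_apply, Function.prod_apply, LinearMap.id_apply, Prod.mk.injEq]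
    constructor
    · rintro ⟨⟨rfl, h1, h2⟩, h3, -⟩
      exact ⟨a, ⟨⟨h2, h1⟩, h3⟩, rfl, rfl⟩
    · rintro ⟨x, ⟨⟨h2, h1⟩, h3⟩, rfl, rfl⟩
      exact ⟨⟨rfl, h1, h2⟩, h3, h2⟩
  have e3 : LinearMap.graph f ⊓ (Λ₁.prod Λ₂ ⊔ Λ₃.prod Λ₂)
      = (Λ₂.comap f ⊓ (Λ₁ ⊔ Λ₃)).map (LinearMap.prod LinearMap.id f) := by
    rw [Submodule.prod_sup_prod, sup_idem]
    ext ⟨a, b⟩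
    simp only [Submodule.mem_inf, LinearMap.mem_graph_iff, Submodule.mem_prod, Submodule.mem_map,
      Submodule.mem_comap, LinearMap.prod_apply, Function.prod_apply, LinearMap.id_apply, Prod.mk.injEq]
    constructor
    · rintro ⟨rfl, h3, h2⟩
      exact ⟨a, ⟨h2, h3⟩, rfl, rfl⟩
    · rintro ⟨x, ⟨h2, h3⟩, rfl, rfl⟩
      exact ⟨rfl, h3, h2⟩
  have e4 : posInd (symForm2 n) (LinearMap.graph f) (Λ₁.prod Λ₂) (Λ₃.prod Λ₂)
      = posInd (fun x y => - symForm n x y) (Λ₂.comap f) Λ₁ Λ₃ := by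
    unfold posInd
    congr 1
    ext k
    simp only [Set.mem_ofPred_eq]
    rw [e3]
    constructor
    · rintro ⟨P, hP, hpos, rfl⟩
      obtain ⟨Q, hQ, rfl⟩ : ∃ Q ≤ Λ₂.comap f ⊓ (Λ₁ ⊔ Λ₃),
          Q.map (LinearMap.prod LinearMap.id f) = P :=
        by
          refine ⟨P.comap (LinearMap.prod LinearMap.id f), ?_, ?_⟩
          · intro x hx
            obtain ⟨y, hy, hxy⟩ := hP hx
            have : y = x := congrArg Prod.fst hxy
            exact this ▸ hy
          · apply le_antisymm (Submodule.map_comap_le _ _)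
            intro p hp
            obtain ⟨y, hy, rfl⟩ := hP hp
            exact ⟨y, hp, rfl⟩
      refine ⟨Q, hQ, ?_, finrank_map_gr f Q⟩
      intro x hx hx0 y hy z hz hxyz
      have hx2 : f x ∈ Λ₂ := (hQ hx).1
      have h := hpos (x, f x) ⟨x, hx, rfl⟩ (fun h => hx0 (congrArg Prod.fst h))
        (y, f x) ⟨hy, hx2⟩ (z, 0) ⟨hz, Λ₂.zero_mem⟩ (by simp [hxyz])
      simpa [symForm2, h₂.1 _ hx2 _ Λ₂.zero_mem] using h
    · rintro ⟨Q, hQ, hpos, rfl⟩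
      refine ⟨Q.map (LinearMap.prod LinearMap.id f), Submodule.map_mono hQ, ?_,
        (finrank_map_gr f Q).symm⟩
      rintro _ ⟨x, hx, rfl⟩ hx0 ⟨y, u⟩ ⟨hy, hu⟩ ⟨z, v⟩ ⟨hz, hv⟩ hxyz
      have h := hpos x hx (fun h => hx0 (by simp [h])) y hy z hz (congrArg Prod.fst hxyz)
      simpa [symForm2, h₂.1 _ hu _ hv] using h
  unfold tripleIdx
  rw [e4, e1, e2, finrank_map_gr, finrank_map_gr]
end
end

section
/- Let M ∈ Sp(2n) and let Λ₁, Λ₂, Λ₃, Λ₄ be Lagrangian subspaces of (ℂ^{2n}, ω). Then i(Gr(M), Λ₁⊕Λ₂, Λ₃⊕Λ₄) = i(MΛ₁, Λ₂, Λ₄) + i(M⁻¹Λ₄, Λ₁, Λ₃; −ω), and equivalently i(Gr(M), Λ₁⊕Λ₂, Λ₃⊕Λ₄) = i(MΛ₃, Λ₂, Λ₄) + i(M⁻¹Λ₂, Λ₁, Λ₃; −ω), where the left-hand triple indices are computed in (ℂ^{2n}⊕ℂ^{2n}, −ω⊕ω), the indices with argument MΛ in (ℂ^{2n}, ω), and the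 indices with argument M⁻¹Λ in (ℂ^{2n}, −ω). -/
open Matrix Module Submodule

noncomputable section

set_option linter.unusedSectionVars false

lemma finrank_map_inj {V V' : Type*} [AddCommGroup V] [Module ℂ V] [AddCommGroup V'] [Module ℂ V']
    (f : V →ₗ[ℂ] V') (hf : Function.Injective f) (K : Submodule ℂ V) :
    finrank ℂ (K.map f) = finrank ℂ K :=
  (LinearEquiv.finrank_eq (Submodule.equivMapOfInjective f hf K)).symm

lemma exists_compl_in {V : Type*} [AddCommGroup V] [Module ℂ V]
    (A W : Submodule ℂ V) (h : A ≤ W) : ∃ D : Submodule ℂ V, A ⊓ D = ⊥ ∧ A ⊔ D = W := by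
  obtain ⟨D, hD⟩ := Submodule.exists_isCompl A
  refine ⟨D ⊓ W, ?_, ?_⟩
  · rw [← inf_assoc, hD.inf_eq_bot, bot_inf_eq]
  · rw [← sup_inf_assoc_of_le D h, hD.sup_eq_top, top_inf_eq]

section Core
variable {V : Type*} [AddCommGroup V] [Module ℂ V]

/-- left orthogonal of `S` with respect to a sesquilinear form. -/
def orthL (B : V →ₗ[ℂ] V →ₗ⋆[ℂ] ℂ) (S : Submodule ℂ V) : Submodule ℂ V where
  carrier := {x | ∀ s ∈ S, B x s = 0}
  add_mem' := by
    intro a b ha hb s hs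
    simp [ha s hs, hb s hs]
  zero_mem' := by intro s _; simp
  smul_mem' := by
    intro c x hx s hs
    simp [hx s hs]

lemma mem_orthL {B : V →ₗ[ℂ] V →ₗ⋆[ℂ] ℂ} {S : Submodule ℂ V} {x : V} :
    x ∈ orthL B S ↔ ∀ s ∈ S, B x s = 0 := Iff.rfl

lemma orthL_anti {B : V →ₗ[ℂ] V →ₗ⋆[ℂ] ℂ} {S T : Submodule ℂ V} (h : S ≤ T) :
    orthL B T ≤ orthL B S := fun _ hx s hs => hx s (h hs)

variable [FiniteDimensional ℂ V]

lemma finrank_le_orthL (B : V →ₗ[ℂ] V →ₗ⋆[ℂ] ℂ) (S C : Submodule ℂ V) :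
    finrank ℂ S ≤ finrank ℂ ↥(S ⊓ orthL B C) + finrank ℂ C := by
  classical
  let b := Module.finBasis ℂ C
  let g : S →ₗ[ℂ] (Fin (finrank ℂ C) → ℂ) :=
    { toFun := fun x i => B x (b i)
      map_add' := by intro x y; ext i; simp
      map_smul' := by intro c x; ext i; simp }
  have h1 := LinearMap.finrank_range_add_finrank_ker g
  have h2 : finrank ℂ (LinearMap.range g) ≤ finrank ℂ C := by
    simpa using Submodule.finrank_le (LinearMap.range g)
  have h3 : finrank ℂ (LinearMap.ker g) ≤ finrank ℂ ↥(S ⊓ orthL B C) := by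
    rw [← finrank_map_inj S.subtype S.injective_subtype (LinearMap.ker g)]
    apply Submodule.finrank_mono
    rintro _ ⟨x, hx, rfl⟩
    refine ⟨x.2, fun s hs => ?_⟩
    have hx' : ∀ i, B x (b i) = 0 := fun i => congrFun (LinearMap.mem_ker.1 hx) i
    have hs' := b.sum_repr ⟨s, hs⟩
    have hs2 := congrArg (Submodule.subtype C) hs'
    simp only [map_sum, map_smul, Submodule.subtype_apply] at hs2
    simp only [Submodule.subtype_apply]
    rw [← hs2, map_sum]
    apply Finset.sum_eq_zero
    intro i _
    simp [hx' i]
  omega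

lemma orthL_le_aux (B : V →ₗ[ℂ] V →ₗ⋆[ℂ] ℂ) (U W : Submodule ℂ V)
    (hr : ∀ u ∈ U, ∀ x ∈ W, B x u = 0 → B u x = 0) :
    finrank ℂ U + finrank ℂ ↥(W ⊓ orthL B U) ≤ finrank ℂ W + finrank ℂ ↥(U ⊓ orthL B W) := by
  obtain ⟨D, hDK, hDW⟩ := exists_compl_in (W ⊓ orthL B U) W inf_le_left
  have h1 := finrank_le_orthL B U D
  have h2 := Submodule.finrank_sup_add_finrank_inf_eq (W ⊓ orthL B U) D
  rw [hDK, hDW] at h2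
  have h3 : finrank ℂ ↥(U ⊓ orthL B D) ≤ finrank ℂ ↥(U ⊓ orthL B W) := by
    apply Submodule.finrank_mono
    rintro u ⟨hu, hud⟩
    refine ⟨hu, fun x hx => ?_⟩
    rw [← hDW] at hx
    obtain ⟨a, ha, d, hd, rfl⟩ := Submodule.mem_sup.1 hx
    rw [map_add, hud d hd, hr u hu a ha.1 (ha.2 u hu), add_zero]
  simp at h2
  omega

lemma orthL_eq_aux (B : V →ₗ[ℂ] V →ₗ⋆[ℂ] ℂ) (U W : Submodule ℂ V)
    (hr : ∀ u ∈ U, ∀ x ∈ W, B x u = 0 ↔ B u x = 0) :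
    finrank ℂ U + finrank ℂ ↥(W ⊓ orthL B U) = finrank ℂ W + finrank ℂ ↥(U ⊓ orthL B W) :=
  le_antisymm (orthL_le_aux B U W fun u hu x hx => (hr u hu x hx).1)
    (orthL_le_aux B W U fun u hu x hx => (hr x hx u hu).2)

/-- largest dimension of a subspace of `S` on which `q` is positive. -/
def mpos (q : V → ℝ) (S : Submodule ℂ V) : ℕ :=
  sSup {k : ℕ | ∃ P : Submodule ℂ V, P ≤ S ∧ (∀ x ∈ P, x ≠ 0 → 0 < q x) ∧ k = finrank ℂ P}

lemma mpos_bdd (q : V → ℝ) (S : Submodule ℂ V) :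
    BddAbove {k : ℕ | ∃ P : Submodule ℂ V, P ≤ S ∧ (∀ x ∈ P, x ≠ 0 → 0 < q x) ∧
      k = finrank ℂ P} := by
  refine ⟨finrank ℂ V, ?_⟩
  rintro k ⟨P, _, _, rfl⟩
  exact Submodule.finrank_le P

lemma le_mpos (q : V → ℝ) (S P : Submodule ℂ V) (hP : P ≤ S) (hq : ∀ x ∈ P, x ≠ 0 → 0 < q x) :
    finrank ℂ P ≤ mpos q S :=
  le_csSup (mpos_bdd q S) ⟨P, hP, hq, rfl⟩

lemma exists_mpos (q : V → ℝ) (S : Submodule ℂ V) :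
    ∃ P : Submodule ℂ V, P ≤ S ∧ (∀ x ∈ P, x ≠ 0 → 0 < q x) ∧ finrank ℂ P = mpos q S := by
  obtain ⟨P, h1, h2, h3⟩ := Nat.sSup_mem (s := {k : ℕ | ∃ P : Submodule ℂ V, P ≤ S ∧
    (∀ x ∈ P, x ≠ 0 → 0 < q x) ∧ k = finrank ℂ P})
    ⟨0, ⊥, bot_le, by intro x hx h; exact absurd ((Submodule.mem_bot ℂ).1 hx) h, by simp⟩
    (mpos_bdd q S)
  exact ⟨P, h1, h2, h3.symm⟩

lemma pos_nonpos_finrank (q : V → ℝ) (S P N : Submodule ℂ V) (hPS : P ≤ S) (hNS : N ≤ S)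
    (hP : ∀ x ∈ P, x ≠ 0 → 0 < q x) (hN : ∀ x ∈ N, q x ≤ 0) :
    finrank ℂ P + finrank ℂ N ≤ finrank ℂ S := by
  have h0 : P ⊓ N = ⊥ := by
    rw [eq_bot_iff]
    rintro x ⟨hx, hx'⟩
    by_contra h
    exact absurd (hP x hx h) (not_lt.2 (hN x hx'))
  have h1 := Submodule.finrank_sup_add_finrank_inf_eq P N
  rw [h0] at h1
  have h2 := Submodule.finrank_mono (sup_le hPS hNS)
  simp at h1
  omega

lemma exists_nonpos (B : V →ₗ[ℂ] V →ₗ⋆[ℂ] ℂ) (S P : Submodule ℂ V)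
    (hB : ∀ x ∈ S, ∀ y ∈ S, B x y = (starRingEnd ℂ) (B y x))
    (hPS : P ≤ S) (hP : ∀ x ∈ P, x ≠ 0 → 0 < (B x x).re)
    (hm : finrank ℂ P = mpos (fun x => (B x x).re) S) :
    (∀ x ∈ S ⊓ orthL B P, (B x x).re ≤ 0) ∧
      finrank ℂ S ≤ finrank ℂ ↥(S ⊓ orthL B P) + finrank ℂ P := by
  refine ⟨?_, finrank_le_orthL B S P⟩
  rintro x ⟨hxS, hxP⟩
  by_contra hx
  push Not at hx
  have hxP' : x ∉ P := by
    intro h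
    have := hxP x h
    rw [this] at hx
    simp at hx
  have hlt : P < P ⊔ Submodule.span ℂ {x} := by
    refine lt_of_le_of_ne le_sup_left ?_
    intro h
    apply hxP'
    rw [h]
    exact Submodule.mem_sup_right (Submodule.mem_span_singleton_self x)
  have h1 := Submodule.finrank_lt_finrank_of_lt hlt
  have h2 := le_mpos (fun x => (B x x).re) S (P ⊔ Submodule.span ℂ {x})
    (sup_le hPS (by rw [Submodule.span_singleton_le_iff_mem]; exact hxS)) (by
      intro z hz hz0
      obtain ⟨p, hp, r, hr, rfl⟩ := Submodule.mem_sup.1 hz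
      obtain ⟨c, rfl⟩ := Submodule.mem_span_singleton.1 hr
      have e1 : B x p = 0 := hxP p hp
      have e2 : B p x = 0 := by rw [hB p (hPS hp) x hxS, e1, map_zero]
      have e3 : (B (p + c • x) (p + c • x)).re = (B p p).re + Complex.normSq c * (B x x).re := by
        have : B (p + c • x) (p + c • x) = B p p + (Complex.normSq c : ℂ) * B x x := by
          simp only [map_add, LinearMap.add_apply, map_smul, LinearMap.smul_apply, smul_eq_mul,
            LinearMap.map_smulₛₗ, e1, e2, Complex.normSq_eq_conj_mul_self]
          ring
        rw [this]; simp
      show 0 < (B (p + c • x) (p + c • x)).re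
      rw [e3]
      by_cases hc : c = 0
      · subst hc
        have : p ≠ 0 := by simpa using hz0
        simpa using hP p hp this
      · have hc' := Complex.normSq_pos.2 hc
        have : 0 ≤ (B p p).re := by
          by_cases hp0 : p = 0
          · simp [hp0]
          · exact (hP p hp hp0).le
        positivity)
  omega

lemma isotropic_orth (B : V →ₗ[ℂ] V →ₗ⋆[ℂ] ℂ) (N : Submodule ℂ V)
    (hB : ∀ x ∈ N, ∀ y ∈ N, B x y = (starRingEnd ℂ) (B y x))
    (hN : ∀ x ∈ N, (B x x).re ≤ 0) (u : V) (hu : u ∈ N) (huu : B u u = 0) :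
    ∀ y ∈ N, B u y = 0 := by
  intro y hy
  by_contra h
  have hpos := Complex.normSq_pos.2 h
  have key : ∀ t : ℝ, (B y y).re + 2 * t * Complex.normSq (B u y) ≤ 0 := by
    intro t
    have h1 := hN (y + ((t : ℂ) * (starRingEnd ℂ) (B u y)) • u)
      (N.add_mem hy (N.smul_mem _ hu))
    have e : B (y + ((t : ℂ) * (starRingEnd ℂ) (B u y)) • u)
        (y + ((t : ℂ) * (starRingEnd ℂ) (B u y)) • u)
        = B y y + ((2 * t * Complex.normSq (B u y) : ℝ) : ℂ) := by
      simp only [map_add, LinearMap.add_apply, map_smul, LinearMap.smul_apply, smul_eq_mul,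
        LinearMap.map_smulₛₗ, huu, hB y hy u hu]
      push_cast
      rw [Complex.normSq_eq_conj_mul_self]
      simp
      ring
    rw [e] at h1
    simpa using h1
  have := key ((1 - (B y y).re) / (2 * Complex.normSq (B u y)))
  have e : 2 * ((1 - (B y y).re) / (2 * Complex.normSq (B u y))) * Complex.normSq (B u y)
      = 1 - (B y y).re := by field_simp
  rw [e] at this
  linarith

theorem mpos_decomp (B : V →ₗ[ℂ] V →ₗ⋆[ℂ] ℂ) (W U A₁ A₂ : Submodule ℂ V)
    (hB : ∀ x ∈ W, ∀ y ∈ W, B x y = (starRingEnd ℂ) (B y x))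
    (hU : U ≤ W) (hsup : A₁ ⊔ A₂ = W ⊓ orthL B U) (hinf : A₁ ⊓ A₂ = U)
    (h12 : ∀ x ∈ A₁, ∀ y ∈ A₂, B x y = 0) :
    mpos (fun x => (B x x).re) W + finrank ℂ ↥(U ⊓ orthL B W)
      = mpos (fun x => (B x x).re) A₁ + mpos (fun x => (B x x).re) A₂ + finrank ℂ U := by
  set q : V → ℝ := fun x => (B x x).re with hq
  have hrefl : ∀ x ∈ W, ∀ y ∈ W, B y x = 0 ↔ B x y = 0 := by
    intro x hx y hy
    rw [hB x hx y hy]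
    exact (map_eq_zero (starRingEnd ℂ)).symm
  have hKW : W ⊓ orthL B U ≤ W := inf_le_left
  have hA₁K : A₁ ≤ W ⊓ orthL B U := hsup ▸ le_sup_left
  have hA₂K : A₂ ≤ W ⊓ orthL B U := hsup ▸ le_sup_right
  have hA₁ : A₁ ≤ W := hA₁K.trans hKW
  have hA₂ : A₂ ≤ W := hA₂K.trans hKW
  have hU₁ : U ≤ A₁ := hinf ▸ inf_le_left
  have hU₂ : U ≤ A₂ := hinf ▸ inf_le_right
  have h21 : ∀ x ∈ A₂, ∀ y ∈ A₁, B x y = 0 := fun x hx y hy =>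
    (hrefl x (hA₂ hx) y (hA₁ hy)).1 (h12 y hy x hx)
  have hUU : ∀ u ∈ U, B u u = 0 := fun u hu => h12 u (hU₁ hu) u (hU₂ hu)
  have hqadd : ∀ x ∈ A₁, ∀ y ∈ A₂, q (x + y) = q x + q y := by
    intro x hx y hy
    simp [hq, h12 x hx y hy, h21 y hy x hx]
  obtain ⟨P₁, hP₁, hp₁, hm₁⟩ := exists_mpos q A₁
  obtain ⟨P₂, hP₂, hp₂, hm₂⟩ := exists_mpos q A₂
  obtain ⟨P, hPW, hp, hm⟩ := exists_mpos q W
  obtain ⟨hn₁, hd₁⟩ := exists_nonpos B A₁ P₁ (fun x hx y hy => hB x (hA₁ hx) y (hA₁ hy)) hP₁ hp₁ hm₁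
  obtain ⟨hn₂, hd₂⟩ := exists_nonpos B A₂ P₂ (fun x hx y hy => hB x (hA₂ hx) y (hA₂ hy)) hP₂ hp₂ hm₂
  obtain ⟨hn, hd⟩ := exists_nonpos B W P hB hPW hp hm
  set N₁ := A₁ ⊓ orthL B P₁
  set N₂ := A₂ ⊓ orthL B P₂
  set N := W ⊓ orthL B P
  set K := W ⊓ orthL B U
  have hUN₁ : U ≤ N₁ := fun u hu => ⟨hU₁ hu, fun p hp => h21 u (hU₂ hu) p (hP₁ hp)⟩
  have hUN₂ : U ≤ N₂ := fun u hu => ⟨hU₂ hu, fun p hp => h12 u (hU₁ hu) p (hP₂ hp)⟩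
  have hNN : N₁ ⊓ N₂ = U := le_antisymm
    (hinf ▸ inf_le_inf inf_le_left inf_le_left) (le_inf hUN₁ hUN₂)
  have hPP : P₁ ⊓ P₂ = ⊥ := by
    rw [eq_bot_iff]
    rintro x ⟨hx, hx'⟩
    by_contra h
    have h1 := hp₁ x hx h
    simp [hq, h12 x (hP₁ hx) x (hP₂ hx')] at h1
  have dA := Submodule.finrank_sup_add_finrank_inf_eq A₁ A₂
  rw [hsup, hinf] at dA
  have dN := Submodule.finrank_sup_add_finrank_inf_eq N₁ N₂
  rw [hNN] at dN
  have dP := Submodule.finrank_sup_add_finrank_inf_eq P₁ P₂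
  rw [hPP, finrank_bot] at dP
  have hNK : N₁ ⊔ N₂ ≤ K := sup_le (inf_le_left.trans hA₁K) (inf_le_left.trans hA₂K)
  have hPK : P₁ ⊔ P₂ ≤ K := sup_le (hP₁.trans hA₁K) (hP₂.trans hA₂K)
  have hNs : ∀ x ∈ N₁ ⊔ N₂, q x ≤ 0 := by
    intro z hz
    obtain ⟨x, hx, y, hy, rfl⟩ := Submodule.mem_sup.1 hz
    rw [hqadd x hx.1 y hy.1]
    have h1 : q x ≤ 0 := hn₁ x hx
    have h2 : q y ≤ 0 := hn₂ y hy
    linarith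
  have hq0 : q 0 = 0 := by simp [hq]
  have hPs : ∀ x ∈ P₁ ⊔ P₂, x ≠ 0 → 0 < q x := by
    intro z hz hz0
    obtain ⟨x, hx, y, hy, rfl⟩ := Submodule.mem_sup.1 hz
    rw [hqadd x (hP₁ hx) y (hP₂ hy)]
    by_cases hx0 : x = 0
    · subst hx0
      rw [hq0, zero_add]
      exact hp₂ y hy (by simpa using hz0)
    · have h1 := hp₁ x hx hx0
      by_cases hy0 : y = 0
      · rw [hy0, hq0]; linarith
      · have h2 := hp₂ y hy hy0
        linarith
  -- upper bound
  have u1 := orthL_eq_aux B P U fun u hu x hx => hrefl u (hPW hu) x (hU hx)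
  have u2 := orthL_eq_aux B U P fun u hu x hx => hrefl u (hU hu) x (hPW hx)
  have u3 : finrank ℂ ↥(U ⊓ orthL B W) ≤ finrank ℂ ↥(U ⊓ orthL B P) :=
    Submodule.finrank_mono (inf_le_inf_left _ (orthL_anti hPW))
  have u4 := pos_nonpos_finrank q K (P ⊓ orthL B U) (N₁ ⊔ N₂) (inf_le_inf_right _ hPW) hNK
    (fun x hx => hp x hx.1) hNs
  -- lower bound
  have hNW : N ≤ W := inf_le_left
  have hUK : U ≤ K := hU₁.trans hA₁K
  have l1 := pos_nonpos_finrank q K (P₁ ⊔ P₂) ((N ⊓ orthL B U) ⊔ U) hPK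
    (sup_le (inf_le_inf_right _ hNW) hUK) hPs (by
      intro z hz
      obtain ⟨x, hx, u, hu, rfl⟩ := Submodule.mem_sup.1 hz
      have e1 : B x u = 0 := hx.2 u hu
      have e2 : B u x = 0 := (hrefl u (hU hu) x (hNW hx.1)).1 e1
      have : q (x + u) = q x := by simp [hq, e1, e2, hUU u hu]
      rw [this]
      exact hn x hx.1)
  have l2 := Submodule.finrank_sup_add_finrank_inf_eq (N ⊓ orthL B U) U
  have l3 := orthL_eq_aux B N U fun u hu x hx => hrefl u (hNW hu) x (hU hx)
  have l4 : finrank ℂ ↥(N ⊓ orthL B U ⊓ U) ≤ finrank ℂ ↥(U ⊓ orthL B N) := by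
    apply Submodule.finrank_mono
    rintro u ⟨⟨huN, _⟩, hu⟩
    exact ⟨hu, isotropic_orth B N (fun x hx y hy => hB x (hNW hx) y (hNW hy)) hn u huN (hUU u hu)⟩
  have l5 : finrank ℂ U + finrank ℂ K = _ :=
    orthL_eq_aux B U W fun u hu x hx => hrefl u (hU hu) x hx
  omega

lemma exists_split (A C : Submodule ℂ V) :
    ∃ p : V →ₗ[ℂ] V, ∀ x ∈ A ⊔ C, p x ∈ A ∧ x - p x ∈ C := by
  let g : (A × C) →ₗ[ℂ] V := A.subtype.coprod C.subtype
  obtain ⟨s, hs⟩ := LinearMap.exists_rightInverse_of_surjective g.rangeRestrict g.range_rangeRestrict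
  obtain ⟨p, hp⟩ := LinearMap.exists_extend (A.subtype ∘ₗ LinearMap.fst ℂ A C ∘ₗ s)
  refine ⟨p, fun x hx => ?_⟩
  have hxr : x ∈ LinearMap.range g := by
    obtain ⟨a, ha, c, hc, rfl⟩ := Submodule.mem_sup.1 hx
    exact ⟨(⟨a, ha⟩, ⟨c, hc⟩), by simp [g]⟩
  have h1 : p x = (s ⟨x, hxr⟩).1 := LinearMap.congr_fun hp ⟨x, hxr⟩
  have h2 : ((s ⟨x, hxr⟩).1 : V) + (s ⟨x, hxr⟩).2 = x :=
    congrArg Subtype.val (LinearMap.congr_fun hs ⟨x, hxr⟩)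
  rw [h1]
  refine ⟨(s ⟨x, hxr⟩).1.2, ?_⟩
  have : x - (s ⟨x, hxr⟩).1 = (s ⟨x, hxr⟩).2 := by
    rw [sub_eq_iff_eq_add, add_comm]; exact h2.symm
  rw [this]
  exact (s ⟨x, hxr⟩).2.2

section Symp
variable (w : V →ₗ[ℂ] V →ₗ⋆[ℂ] ℂ)

lemma skew_refl (hs : ∀ x y, w x y = - (starRingEnd ℂ) (w y x)) (x y : V) :
    w y x = 0 ↔ w x y = 0 := by
  rw [hs x y, neg_eq_zero]
  exact (map_eq_zero (starRingEnd ℂ)).symm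

lemma finrank_orth (hs : ∀ x y, w x y = - (starRingEnd ℂ) (w y x))
    (nd : ∀ x, (∀ y, w x y = 0) → x = 0) (S : Submodule ℂ V) :
    finrank ℂ S + finrank ℂ ↥(orthL w S) = finrank ℂ V := by
  have h := orthL_eq_aux w S ⊤ fun u _ x _ => skew_refl w hs u x
  have h0 : S ⊓ orthL w ⊤ = ⊥ := by
    rw [eq_bot_iff]
    rintro x ⟨_, hx⟩
    exact nd x fun y => hx y trivial
  rw [h0, top_inf_eq] at h
  simpa using h

lemma orth_orth (hs : ∀ x y, w x y = - (starRingEnd ℂ) (w y x))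
    (nd : ∀ x, (∀ y, w x y = 0) → x = 0) (S : Submodule ℂ V) :
    orthL w (orthL w S) = S := by
  have h1 := finrank_orth w hs nd S
  have h2 := finrank_orth w hs nd (orthL w S)
  refine (Submodule.eq_of_le_of_finrank_eq ?_ (by omega)).symm
  intro x hx s hsm
  exact (skew_refl w hs x s).1 (hsm x hx)

lemma orth_sup (S T : Submodule ℂ V) : orthL w (S ⊔ T) = orthL w S ⊓ orthL w T := by
  apply le_antisymm
  · exact le_inf (orthL_anti le_sup_left) (orthL_anti le_sup_right)
  · rintro x ⟨h1, h2⟩ z hz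
    obtain ⟨a, ha, c, hc, rfl⟩ := Submodule.mem_sup.1 hz
    rw [map_add, h1 a ha, h2 c hc, add_zero]

lemma orth_inf_lag (hs : ∀ x y, w x y = - (starRingEnd ℂ) (w y x))
    (nd : ∀ x, (∀ y, w x y = 0) → x = 0) (A C : Submodule ℂ V)
    (hA : orthL w A = A) (hC : orthL w C = C) : orthL w (A ⊓ C) = A ⊔ C := by
  rw [← orth_orth w hs nd (A ⊔ C), orth_sup, hA, hC]

lemma lag_of (hs : ∀ x y, w x y = - (starRingEnd ℂ) (w y x))
    (nd : ∀ x, (∀ y, w x y = 0) → x = 0) (A : Submodule ℂ V)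
    (hA : ∀ x ∈ A, ∀ y ∈ A, w x y = 0) (hd : finrank ℂ V = 2 * finrank ℂ A) :
    orthL w A = A := by
  have h1 := finrank_orth w hs nd A
  have hle : A ≤ orthL w A := fun x hx y hy => hA x hx y hy
  exact (Submodule.eq_of_le_of_finrank_eq hle (by omega)).symm

lemma posInd_eq_mpos {X : Type*} [AddCommGroup X] [Module ℂ X] (f : X → X → ℂ)
    (q : X → ℝ) (α β κ : Submodule ℂ X)
    (h : ∀ y ∈ β, ∀ z ∈ κ, y + z ∈ α → (f y z).re = q (y + z)) :
    posInd f α β κ = mpos q (α ⊓ (β ⊔ κ)) := by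
  unfold posInd mpos
  congr 1
  ext k
  constructor
  · rintro ⟨P, hP, hp, hk⟩
    refine ⟨P, hP, fun x hx hx0 => ?_, hk⟩
    obtain ⟨y, hy, z, hz, rfl⟩ := Submodule.mem_sup.1 (hP hx).2
    rw [← h y hy z hz (hP hx).1]
    exact hp _ hx hx0 y hy z hz rfl
  · rintro ⟨P, hP, hp, hk⟩
    refine ⟨P, hP, fun x hx hx0 y hy z hz e => ?_, hk⟩
    subst e
    rw [h y hy z hz (hP hx).1]
    exact hp _ hx hx0

theorem core_add (hs : ∀ x y, w x y = - (starRingEnd ℂ) (w y x))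
    (nd : ∀ x, (∀ y, w x y = 0) → x = 0) (A₁ A₂ A₃ A₄ : Submodule ℂ V)
    (h₁ : orthL w A₁ = A₁) (h₂ : orthL w A₂ = A₂) (h₃ : orthL w A₃ = A₃) (h₄ : orthL w A₄ = A₄)
    (q : V → ℝ)
    (hq : ∀ x, ∀ y₁ ∈ A₁, ∀ z₃ ∈ A₃, ∀ y₂ ∈ A₂, ∀ z₄ ∈ A₄, x = y₁ + z₃ → x = y₂ + z₄ →
      q x = (- w y₁ z₃ + w y₂ z₄).re) :
    mpos q ((A₁ ⊔ A₃) ⊓ (A₂ ⊔ A₄)) + finrank ℂ ↥(A₁ ⊓ A₂ ⊓ A₄) + finrank ℂ ↥(A₄ ⊓ A₁ ⊓ A₃)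
      = posInd (fun x y => w x y) A₁ A₂ A₄ + posInd (fun x y => - w x y) A₄ A₁ A₃
        + finrank ℂ ↥(A₁ ⊓ A₄) + finrank ℂ ↥(A₁ ⊓ A₂ ⊓ A₃ ⊓ A₄) := by
  have i₁ : ∀ x ∈ A₁, ∀ y ∈ A₁, w x y = 0 := fun x hx => by rw [← h₁] at hx; exact hx
  have i₂ : ∀ x ∈ A₂, ∀ y ∈ A₂, w x y = 0 := fun x hx => by rw [← h₂] at hx; exact hx
  have i₃ : ∀ x ∈ A₃, ∀ y ∈ A₃, w x y = 0 := fun x hx => by rw [← h₃] at hx; exact hx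
  have i₄ : ∀ x ∈ A₄, ∀ y ∈ A₄, w x y = 0 := fun x hx => by rw [← h₄] at hx; exact hx
  obtain ⟨p, hp⟩ := exists_split A₁ A₃
  obtain ⟨r, hr⟩ := exists_split A₂ A₄
  let B : V →ₗ[ℂ] V →ₗ⋆[ℂ] ℂ := w ∘ₗ (r - p)
  have hBdef : ∀ x y, B x y = w (r x) y - w (p x) y := by
    intro x y; simp [B]
  set W := (A₁ ⊔ A₃) ⊓ (A₂ ⊔ A₄) with hW
  -- values of `B` from arbitrary decompositions
  have indep : ∀ (A C : Submodule ℂ V) (_ : ∀ x ∈ A, ∀ y ∈ A, w x y = 0)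
      (_ : ∀ x ∈ C, ∀ y ∈ C, w x y = 0) (y y' z z' : V), y ∈ A → y' ∈ A → z ∈ C → z' ∈ C →
      y + z = y' + z' → ∀ x ∈ A ⊔ C, w y x = w y' x := by
    intro A C hA hC y y' z z' hy hy' hz hz' e x hx
    obtain ⟨a, ha, c, hc, rfl⟩ := Submodule.mem_sup.1 hx
    have e' : y - y' = z' - z := by
      rw [sub_eq_sub_iff_add_eq_add, e, add_comm]
    have : w (y - y') (a + c) = 0 := by
      rw [map_add, hA _ (A.sub_mem hy hy') a ha, e', hC _ (C.sub_mem hz' hz) c hc, add_zero]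
    rw [map_sub, LinearMap.sub_apply, sub_eq_zero] at this
    exact this
  have hBval : ∀ y₁ ∈ A₁, ∀ z₃ ∈ A₃, ∀ y₂ ∈ A₂, ∀ z₄ ∈ A₄, y₁ + z₃ = y₂ + z₄ → ∀ x' ∈ W,
      B (y₁ + z₃) x' = w y₂ x' - w y₁ x' := by
    intro y₁ hy₁ z₃ hz₃ y₂ hy₂ z₄ hz₄ e x' hx'
    have m1 : y₁ + z₃ ∈ A₁ ⊔ A₃ := Submodule.add_mem_sup hy₁ hz₃
    have m2 : y₁ + z₃ ∈ A₂ ⊔ A₄ := e ▸ Submodule.add_mem_sup hy₂ hz₄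
    rw [hBdef]
    rw [indep A₁ A₃ i₁ i₃ (p (y₁ + z₃)) y₁ _ z₃ (hp _ m1).1 hy₁ (hp _ m1).2 hz₃
      (by abel) x' hx'.1]
    rw [indep A₂ A₄ i₂ i₄ (r (y₁ + z₃)) y₂ _ z₄ (hr _ m2).1 hy₂ (hr _ m2).2 hz₄
      (by rw [← e]; abel) x' hx'.2]
  have hBq : ∀ x ∈ W, (B x x).re = q x := by
    intro x hx
    obtain ⟨y₁, hy₁, z₃, hz₃, e1⟩ := Submodule.mem_sup.1 hx.1
    obtain ⟨y₂, hy₂, z₄, hz₄, e2⟩ := Submodule.mem_sup.1 hx.2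
    rw [hq x y₁ hy₁ z₃ hz₃ y₂ hy₂ z₄ hz₄ e1.symm e2.symm]
    have h := hBval y₁ hy₁ z₃ hz₃ y₂ hy₂ z₄ hz₄ (e1.trans e2.symm) x hx
    rw [e1] at h
    rw [h]
    have k1 : w y₁ x = w y₁ z₃ := by rw [← e1, map_add, i₁ y₁ hy₁ y₁ hy₁, zero_add]
    have k2 : w y₂ x = w y₂ z₄ := by rw [← e2, map_add, i₂ y₂ hy₂ y₂ hy₂, zero_add]
    rw [k1, k2]; congr 1; ring
  have hmq : mpos q W = mpos (fun x => (B x x).re) W := by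
    unfold mpos
    congr 1
    ext k
    constructor
    · rintro ⟨P, hP, hp, hk⟩
      exact ⟨P, hP, fun x hx hx0 => (hp x hx hx0).trans_eq (hBq x (hP hx)).symm, hk⟩
    · rintro ⟨P, hP, hp, hk⟩
      exact ⟨P, hP, fun x hx hx0 => (hp x hx hx0).trans_eq (hBq x (hP hx)), hk⟩
  have herm1 : ∀ (A C : Submodule ℂ V) (_ : ∀ x ∈ A, ∀ y ∈ A, w x y = 0)
      (_ : ∀ x ∈ C, ∀ y ∈ C, w x y = 0) (s : V →ₗ[ℂ] V)
      (_ : ∀ x ∈ A ⊔ C, s x ∈ A ∧ x - s x ∈ C), ∀ x ∈ A ⊔ C, ∀ y ∈ A ⊔ C,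
      w (s x) y - (starRingEnd ℂ) (w (s y) x) = w x y := by
    intro A C hA hC s hs' x hx y hy
    have e1 : (starRingEnd ℂ) (w (s y) x) = - w x (s y) := by rw [hs x (s y)]; simp
    have e2 := hA _ (hs' x hx).1 _ (hs' y hy).1
    have e3 := hC _ (hs' x hx).2 _ (hs' y hy).2
    simp only [map_sub, LinearMap.sub_apply] at e3
    rw [e1]
    linear_combination (-1 : ℂ) * e3 + e2
  have hB : ∀ x ∈ W, ∀ y ∈ W, B x y = (starRingEnd ℂ) (B y x) := by
    intro x hx y hy
    have e1 := herm1 A₁ A₃ i₁ i₃ p hp x hx.1 y hy.1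
    have e2 := herm1 A₂ A₄ i₂ i₄ r hr x hx.2 y hy.2
    rw [hBdef, hBdef, map_sub]
    linear_combination e2 - e1
  -- the pieces
  have b1 : ∀ a ∈ A₁ ⊓ (A₂ ⊔ A₄), ∀ b₂ ∈ A₂, ∀ b₄ ∈ A₄, a = b₂ + b₄ → ∀ x ∈ W,
      B a x = w b₂ x - w a x := by
    intro a ha b₂ hb₂ b₄ hb₄ e x hx
    have := hBval a ha.1 0 A₃.zero_mem b₂ hb₂ b₄ hb₄ (by rw [add_zero, e]) x hx
    rwa [add_zero] at this
  have b4 : ∀ a ∈ A₄ ⊓ (A₁ ⊔ A₃), ∀ c₁ ∈ A₁, ∀ c₃ ∈ A₃, a = c₁ + c₃ → ∀ x ∈ W,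
      B a x = - w c₁ x := by
    intro a ha c₁ hc₁ c₃ hc₃ e x hx
    have := hBval c₁ hc₁ c₃ hc₃ 0 A₂.zero_mem a ha.1 (by rw [zero_add, e]) x hx
    rw [← e] at this
    rw [this]; simp
  have m1W : A₁ ⊓ (A₂ ⊔ A₄) ≤ W := inf_le_inf_right _ le_sup_left
  have m4W : A₄ ⊓ (A₁ ⊔ A₃) ≤ W := fun x hx => ⟨hx.2, Submodule.mem_sup_right hx.1⟩
  have bU : ∀ u ∈ A₁ ⊓ A₄, ∀ x ∈ W, B u x = - w u x := by
    intro u hu x hx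
    exact b4 u ⟨hu.2, Submodule.mem_sup_left hu.1⟩ u hu.1 0 A₃.zero_mem (by simp) x hx
  have hUW : A₁ ⊓ A₄ ≤ W := fun u hu => ⟨Submodule.mem_sup_left hu.1, Submodule.mem_sup_right hu.2⟩
  have hrefl : ∀ x ∈ W, ∀ y ∈ W, B y x = 0 ↔ B x y = 0 := by
    intro x hx y hy
    rw [hB x hx y hy]
    exact (map_eq_zero (starRingEnd ℂ)).symm
  have o14 := orth_inf_lag w hs nd A₁ A₄ h₁ h₄
  have o13 := orth_inf_lag w hs nd A₁ A₃ h₁ h₃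
  have o24 := orth_inf_lag w hs nd A₂ A₄ h₂ h₄
  have hperp : W ⊓ orthL B (A₁ ⊓ A₄) = W ⊓ (A₁ ⊔ A₄) := by
    rw [← o14]
    ext x
    constructor
    · rintro ⟨hx, hx'⟩
      refine ⟨hx, fun u hu => ?_⟩
      have := (hrefl u (hUW hu) x hx).1 (hx' u hu)
      rw [bU u hu x hx, neg_eq_zero] at this
      exact (skew_refl w hs x u).1 this
    · rintro ⟨hx, hx'⟩
      refine ⟨hx, fun u hu => ?_⟩
      rw [← hrefl x hx u (hUW hu), bU u hu x hx, neg_eq_zero]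
      exact (skew_refl w hs u x).1 (hx' u hu)
  have hsup : (A₁ ⊓ (A₂ ⊔ A₄)) ⊔ (A₄ ⊓ (A₁ ⊔ A₃)) = W ⊓ orthL B (A₁ ⊓ A₄) := by
    rw [hperp]
    apply le_antisymm
    · refine sup_le (le_inf m1W (inf_le_left.trans le_sup_left))
        (le_inf m4W (inf_le_left.trans le_sup_right))
    · rintro x ⟨hx, hx'⟩
      obtain ⟨a, ha, d, hd, rfl⟩ := Submodule.mem_sup.1 hx'
      refine Submodule.add_mem_sup ⟨ha, ?_⟩ ⟨hd, ?_⟩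
      · have := Submodule.sub_mem _ hx.2 (Submodule.mem_sup_right (S := A₂) hd)
        simpa using this
      · have := Submodule.sub_mem _ hx.1 (Submodule.mem_sup_left (T := A₃) ha)
        simpa using this
  have hinf : (A₁ ⊓ (A₂ ⊔ A₄)) ⊓ (A₄ ⊓ (A₁ ⊔ A₃)) = A₁ ⊓ A₄ := by
    apply le_antisymm
    · exact inf_le_inf inf_le_left inf_le_left
    · intro x hx
      exact ⟨⟨hx.1, Submodule.mem_sup_right hx.2⟩, ⟨hx.2, Submodule.mem_sup_left hx.1⟩⟩
  have h12 : ∀ x ∈ A₁ ⊓ (A₂ ⊔ A₄), ∀ y ∈ A₄ ⊓ (A₁ ⊔ A₃), B x y = 0 := by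
    intro x hx y hy
    obtain ⟨b, hb, d, hd, e⟩ := Submodule.mem_sup.1 hx.2
    rw [b1 x hx b hb d hd e.symm y (m4W hy), ← e, map_add, LinearMap.add_apply, i₄ d hd y hy.1]
    ring
  have main := mpos_decomp B W (A₁ ⊓ A₄) (A₁ ⊓ (A₂ ⊔ A₄)) (A₄ ⊓ (A₁ ⊔ A₃)) hB hUW hsup hinf h12
  have e1 : posInd (fun x y => w x y) A₁ A₂ A₄ = mpos (fun x => (B x x).re) (A₁ ⊓ (A₂ ⊔ A₄)) := by
    apply posInd_eq_mpos
    intro y hy z hz hyz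
    have hm : y + z ∈ A₁ ⊓ (A₂ ⊔ A₄) := ⟨hyz, Submodule.add_mem_sup hy hz⟩
    rw [b1 _ hm y hy z hz rfl _ (m1W hm), i₁ _ hyz _ hyz, map_add, i₂ y hy y hy]
    simp
  have e2 : posInd (fun x y => - w x y) A₄ A₁ A₃
      = mpos (fun x => (B x x).re) (A₄ ⊓ (A₁ ⊔ A₃)) := by
    apply posInd_eq_mpos
    intro y hy z hz hyz
    have hm : y + z ∈ A₄ ⊓ (A₁ ⊔ A₃) := ⟨hyz, Submodule.add_mem_sup hy hz⟩
    rw [b4 _ hm y hy z hz rfl _ (m4W hm), map_add, i₁ y hy y hy]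
    simp
  have hrad : (A₁ ⊓ A₄) ⊓ orthL B W = (A₁ ⊓ A₂ ⊓ A₄) ⊔ (A₄ ⊓ A₁ ⊓ A₃) := by
    have hWo : orthL w W = (A₁ ⊓ A₃) ⊔ (A₂ ⊓ A₄) := by
      rw [hW, ← o13, ← o24, ← orth_sup, orth_orth w hs nd]
    have : (A₁ ⊓ A₄) ⊓ orthL B W = (A₁ ⊓ A₄) ⊓ orthL w W := by
      ext u
      constructor
      · rintro ⟨hu, hu'⟩
        refine ⟨hu, fun x hx => ?_⟩
        have := hu' x hx
        rwa [bU u hu x hx, neg_eq_zero] at this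
      · rintro ⟨hu, hu'⟩
        refine ⟨hu, fun x hx => ?_⟩
        rw [bU u hu x hx, hu' x hx, neg_zero]
    rw [this, hWo]
    apply le_antisymm
    · rintro u ⟨hu, hu'⟩
      obtain ⟨a, ha, b, hb, rfl⟩ := Submodule.mem_sup.1 hu'
      rw [add_comm]
      refine Submodule.add_mem_sup ⟨⟨?_, hb.1⟩, hb.2⟩ ⟨⟨?_, ha.1⟩, ha.2⟩
      · simpa using A₁.sub_mem hu.1 ha.1
      · simpa using A₄.sub_mem hu.2 hb.2
    · refine sup_le ?_ ?_
      · intro x hx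
        exact ⟨⟨hx.1.1, hx.2⟩, Submodule.mem_sup_right ⟨hx.1.2, hx.2⟩⟩
      · intro x hx
        exact ⟨⟨hx.1.2, hx.1.1⟩, Submodule.mem_sup_left ⟨hx.1.2, hx.2⟩⟩
  have dd := Submodule.finrank_sup_add_finrank_inf_eq (A₁ ⊓ A₂ ⊓ A₄) (A₄ ⊓ A₁ ⊓ A₃)
  have hI : (A₁ ⊓ A₂ ⊓ A₄) ⊓ (A₄ ⊓ A₁ ⊓ A₃) = A₁ ⊓ A₂ ⊓ A₃ ⊓ A₄ := by
    ext x; simp only [Submodule.mem_inf]; tauto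
  rw [hI, ← hrad] at dd
  rw [hmq, e1, e2]
  omega
end Symp

lemma exists_val (w : V →ₗ[ℂ] V →ₗ⋆[ℂ] ℂ) (A C : Submodule ℂ V)
    (hA : ∀ x ∈ A, ∀ y ∈ A, w x y = 0) (hC : ∀ x ∈ C, ∀ y ∈ C, w x y = 0) :
    ∃ f : V → ℂ, ∀ y ∈ A, ∀ z ∈ C, f (y + z) = w y z := by
  obtain ⟨p, hp⟩ := exists_split A C
  refine ⟨fun x => w (p x) x, fun y hy z hz => ?_⟩
  have hm : y + z ∈ A ⊔ C := Submodule.add_mem_sup hy hz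
  obtain ⟨h1, h2⟩ := hp _ hm
  show w (p (y + z)) (y + z) = w y z
  have e1 := hA _ h1 y hy
  have e2 := hA y hy y hy
  have e3 : y - p (y + z) ∈ C := by
    have := C.sub_mem h2 hz
    have e : y + z - p (y + z) - z = y - p (y + z) := by abel
    rwa [e] at this
  have e4 := hC _ e3 z hz
  rw [map_sub, LinearMap.sub_apply] at e4
  rw [map_add (w (p (y + z))), e1]
  linear_combination (-1 : ℂ) * e4

end Core

lemma comap_sup_bij {X Y : Type*} [AddCommGroup X] [Module ℂ X] [AddCommGroup Y] [Module ℂ Y]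
    (f : X →ₗ[ℂ] Y) (hf : Function.Bijective f) (β κ : Submodule ℂ Y) :
    (β ⊔ κ).comap f = β.comap f ⊔ κ.comap f := by
  apply le_antisymm
  · intro x hx
    obtain ⟨b, hb, d, hd, e⟩ := Submodule.mem_sup.1 (Submodule.mem_comap.1 hx)
    obtain ⟨b, rfl⟩ := hf.2 b
    obtain ⟨d, rfl⟩ := hf.2 d
    rw [← map_add] at e
    rw [← hf.1 e]
    exact Submodule.add_mem_sup hb hd
  · exact sup_le (Submodule.comap_mono le_sup_left) (Submodule.comap_mono le_sup_right)

lemma map_inf_comap' {X Y : Type*} [AddCommGroup X] [Module ℂ X] [AddCommGroup Y] [Module ℂ Y]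
    (f : X →ₗ[ℂ] Y) (α : Submodule ℂ X) (κ : Submodule ℂ Y) :
    α.map f ⊓ κ = (α ⊓ κ.comap f).map f := by
  ext y
  constructor
  · rintro ⟨⟨x, hx, rfl⟩, hy⟩
    exact ⟨x, ⟨hx, hy⟩, rfl⟩
  · rintro ⟨x, ⟨hx, hx'⟩, rfl⟩
    exact ⟨⟨x, hx, rfl⟩, hx'⟩

lemma tripleIdx_map {X Y : Type*} [AddCommGroup X] [Module ℂ X] [AddCommGroup Y] [Module ℂ Y]
    (f : X →ₗ[ℂ] Y) (hf : Function.Bijective f) (w : X → X → ℂ) (w' : Y → Y → ℂ)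
    (hw : ∀ x y, w' (f x) (f y) = w x y) (α : Submodule ℂ X) (β κ : Submodule ℂ Y) :
    tripleIdx w' (α.map f) β κ = tripleIdx w α (β.comap f) (κ.comap f) := by
  have h1 : posInd w' (α.map f) β κ = posInd w α (β.comap f) (κ.comap f) := by
    unfold posInd
    congr 1
    ext k
    rw [← comap_sup_bij f hf, map_inf_comap']
    constructor
    · rintro ⟨P, hP, hp, hk⟩
      have hPr : (P.comap f).map f = P := Submodule.map_comap_eq_of_surjective hf.2 P
      refine ⟨P.comap f, ?_, ?_, ?_⟩
      · intro x hx
        obtain ⟨x', hx', e⟩ := hP hx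
        rwa [← hf.1 e]
      · intro x hx hx0 y hy z hz e
        rw [← hw]
        refine hp (f x) hx (fun h => hx0 (hf.1 (by simpa using h))) _ hy _ hz ?_
        rw [e, map_add]
      · rw [hk, ← finrank_map_inj f hf.1, hPr]
    · rintro ⟨P, hP, hp, hk⟩
      refine ⟨P.map f, Submodule.map_mono hP, ?_, ?_⟩
      · rintro _ ⟨x, hx, rfl⟩ hx0 y hy z hz e
        obtain ⟨y, rfl⟩ := hf.2 y
        obtain ⟨z, rfl⟩ := hf.2 z
        rw [hw]
        rw [← map_add] at e
        exact hp x hx (fun h => hx0 (by simp [h])) y hy z hz (hf.1 e)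
      · rw [hk, finrank_map_inj f hf.1]
  unfold tripleIdx
  rw [h1, map_inf_comap', map_inf_comap', map_inf_comap', finrank_map_inj f hf.1,
    finrank_map_inj f hf.1]

lemma symForm_apply (n : ℕ) (x y : CV n) :
    symForm n x y = ∑ i, (- x (Sum.inr i) * (starRingEnd ℂ) (y (Sum.inl i)))
      + ∑ i, x (Sum.inl i) * (starRingEnd ℂ) (y (Sum.inr i)) := by
  have hx : x = Sum.elim (fun i => x (Sum.inl i)) (fun i => x (Sum.inr i)) := by
    ext i; cases i <;> rfl
  unfold symForm herm
  rw [Fintype.sum_sum_type]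
  conv_lhs => rw [hx]
  simp [Matrix.J, Matrix.fromBlocks_mulVec, Matrix.neg_mulVec]

/-- `symForm` as a sesquilinear map. -/
def symL (n : ℕ) : CV n →ₗ[ℂ] CV n →ₗ⋆[ℂ] ℂ :=
  LinearMap.mk₂'ₛₗ (RingHom.id ℂ) (starRingEnd ℂ) (symForm n)
    (by intro x y z; simp [symForm, herm, Matrix.mulVec_add, add_mul, Finset.sum_add_distrib])
    (by intro c x y; simp only [symForm, herm, Matrix.mulVec_smul, Finset.mul_sum, mul_assoc, Pi.smul_apply, smul_eq_mul, RingHom.id_apply])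
    (by intro x y z; simp [symForm, herm, mul_add, Finset.sum_add_distrib])
    (by intro c x y; simp only [symForm, herm, Finset.mul_sum, mul_left_comm, Pi.smul_apply, smul_eq_mul, map_mul])

lemma symL_apply (n : ℕ) (x y : CV n) : symL n x y = symForm n x y := rfl

lemma symForm_skew (n : ℕ) (x y : CV n) :
    symForm n x y = - (starRingEnd ℂ) (symForm n y x) := by
  rw [symForm_apply, symForm_apply]
  simp only [map_add, map_sum, map_mul, map_neg, Complex.conj_conj, neg_mul,
    Finset.sum_neg_distrib, neg_add, neg_neg]
  rw [add_comm]
  congr 1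
  · exact Finset.sum_congr rfl fun i _ => mul_comm _ _
  · congr 1
    exact Finset.sum_congr rfl fun i _ => mul_comm _ _

lemma symForm_nd (n : ℕ) (x : CV n) (h : ∀ y, symForm n x y = 0) : x = 0 := by
  classical
  ext i
  cases i with
  | inl i =>
    have := h (Pi.single (Sum.inr i) 1)
    rw [symForm_apply] at this
    simpa [Pi.single_apply] using this
  | inr i =>
    have := h (Pi.single (Sum.inl i) 1)
    rw [symForm_apply] at this
    simpa [Pi.single_apply] using this

lemma symForm_inv (n : ℕ) (M : Matrix (Fin n ⊕ Fin n) (Fin n ⊕ Fin n) ℝ)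
    (hM : Mᵀ * Matrix.J (Fin n) ℝ * M = Matrix.J (Fin n) ℝ) (x y : CV n) :
    symForm n ((M.map Complex.ofReal).mulVecLin x) ((M.map Complex.ofReal).mulVecLin y)
      = symForm n x y := by
  have hh : ∀ a b : CV n, herm a b = a ⬝ᵥ star b := fun a b => rfl
  have hJ : (Matrix.J (Fin n) ℝ).map Complex.ofReal = Matrix.J (Fin n) ℂ := by
    ext i j
    rcases i with i | i <;> rcases j with j | j <;>
      simp [Matrix.J, Matrix.one_apply, apply_ite Complex.ofReal]
  have hMc : (M.map Complex.ofReal)ᵀ * Matrix.J (Fin n) ℂ * (M.map Complex.ofReal)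
      = Matrix.J (Fin n) ℂ := by
    have := congrArg (fun A => A.map (Complex.ofRealHom : ℝ →+* ℂ)) hM
    simp only [Matrix.map_mul, Matrix.transpose_map] at this
    have hJ' : (Matrix.J (Fin n) ℝ).map (Complex.ofRealHom : ℝ →+* ℂ) = Matrix.J (Fin n) ℂ := hJ
    rw [hJ'] at this
    exact this
  have hct : (M.map Complex.ofReal)ᴴ = (M.map Complex.ofReal)ᵀ := by
    ext i j
    simp [Matrix.conjTranspose_apply]
  unfold symForm
  rw [hh, hh, Matrix.mulVecLin_apply, Matrix.mulVecLin_apply, Matrix.star_mulVec, hct,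
    dotProduct_comm, ← Matrix.dotProduct_mulVec, Matrix.mulVec_mulVec, Matrix.mulVec_mulVec,
    hMc, dotProduct_comm]

lemma posInd_graph (n : ℕ) (f : CV n →ₗ[ℂ] CV n) (hf : Function.Bijective f)
    (hw : ∀ x y, symForm n (f x) (f y) = symForm n x y)
    (Λ₁ Λ₂ Λ₃ Λ₄ : Submodule ℂ (CV n)) (q : CV n → ℝ)
    (hq : ∀ x, ∀ y₁ ∈ Λ₁, ∀ z₃ ∈ Λ₃, ∀ y₂ ∈ Λ₂.comap f, ∀ z₄ ∈ Λ₄.comap f,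
      x = y₁ + z₃ → x = y₂ + z₄ → q x = (- symForm n y₁ z₃ + symForm n y₂ z₄).re) :
    tripleIdx (symForm2 n) (LinearMap.graph f) (Λ₁.prod Λ₂) (Λ₃.prod Λ₄)
      = mpos q ((Λ₁ ⊔ Λ₃) ⊓ (Λ₂.comap f ⊔ Λ₄.comap f)) + finrank ℂ ↥(Λ₃ ⊓ Λ₄.comap f)
        - finrank ℂ ↥(Λ₁ ⊓ Λ₂.comap f ⊓ Λ₃ ⊓ Λ₄.comap f) := by
  set g : CV n →ₗ[ℂ] CV n × CV n := LinearMap.id.prod f with hg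
  have hgi : Function.Injective g := fun x y h => congrArg Prod.fst h
  have hgr : LinearMap.graph f = LinearMap.range g := LinearMap.graph_eq_range_prod f
  have hm : ∀ (S T : Submodule ℂ (CV n)), LinearMap.graph f ⊓ S.prod T
      = (S ⊓ T.comap f).map g := by
    intro S T
    rw [hgr]
    ext p
    constructor
    · rintro ⟨⟨x, rfl⟩, h⟩
      exact ⟨x, h, rfl⟩
    · rintro ⟨x, h, rfl⟩
      exact ⟨⟨x, rfl⟩, h⟩
  unfold tripleIdx
  have e1 : finrank ℂ ↥(LinearMap.graph f ⊓ Λ₃.prod Λ₄) = finrank ℂ ↥(Λ₃ ⊓ Λ₄.comap f) := by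
    rw [hm, finrank_map_inj g hgi]
  have e2 : finrank ℂ ↥(LinearMap.graph f ⊓ Λ₁.prod Λ₂ ⊓ Λ₃.prod Λ₄)
      = finrank ℂ ↥(Λ₁ ⊓ Λ₂.comap f ⊓ Λ₃ ⊓ Λ₄.comap f) := by
    rw [inf_assoc, Submodule.prod_inf_prod, hm, finrank_map_inj g hgi, Submodule.comap_inf]
    have e : Λ₁ ⊓ Λ₃ ⊓ (Λ₂.comap f ⊓ Λ₄.comap f) = Λ₁ ⊓ Λ₂.comap f ⊓ Λ₃ ⊓ Λ₄.comap f := by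
      ext x; simp only [Submodule.mem_inf]; tauto
    rw [e]
  rw [e1, e2]
  congr 2
  unfold posInd mpos
  rw [Submodule.prod_sup_prod, hm, comap_sup_bij f hf]
  congr 1
  ext k
  constructor
  · rintro ⟨P, hP, hp, hk⟩
    have hPr : (P.comap g).map g = P := by
      rw [Submodule.map_comap_eq, inf_eq_right]
      exact hP.trans LinearMap.map_le_range
    have hPW : P.comap g ≤ (Λ₁ ⊔ Λ₃) ⊓ (Λ₂.comap f ⊔ Λ₄.comap f) := by
      intro x hx
      obtain ⟨x', hx', e⟩ := hP hx
      rwa [← hgi e]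
    refine ⟨P.comap g, hPW, ?_, ?_⟩
    · intro x hx hx0
      obtain ⟨y₁, hy₁, z₃, hz₃, e1⟩ := Submodule.mem_sup.1 (hPW hx).1
      obtain ⟨y₂, hy₂, z₄, hz₄, e2⟩ := Submodule.mem_sup.1 (hPW hx).2
      rw [hq x y₁ hy₁ z₃ hz₃ y₂ hy₂ z₄ hz₄ e1.symm e2.symm, ← hw y₂ z₄]
      refine hp (g x) hx (fun h => hx0 (hgi (by simpa using h))) (y₁, f y₂) ⟨hy₁, hy₂⟩
        (z₃, f z₄) ⟨hz₃, hz₄⟩ ?_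
      refine Prod.ext e1.symm ?_
      show f x = f y₂ + f z₄
      rw [← map_add, e2]
    · rw [hk, ← finrank_map_inj g hgi, hPr]
  · rintro ⟨P, hP, hp, hk⟩
    refine ⟨P.map g, Submodule.map_mono hP, ?_, ?_⟩
    · rintro _ ⟨x, hx, rfl⟩ hx0 ⟨y₁, y₂⟩ hy ⟨z₃, z₄⟩ hz e
      obtain ⟨y₂, rfl⟩ := hf.2 y₂
      obtain ⟨z₄, rfl⟩ := hf.2 z₄
      have a1 : x = y₁ + z₃ := congrArg Prod.fst e
      have a2 : f x = f y₂ + f z₄ := congrArg Prod.snd e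
      rw [← map_add] at a2
      have := hp x hx (fun h => hx0 (by simp [h]))
      rw [hq x y₁ hy.1 z₃ hz.1 y₂ hy.2 z₄ hz.2 a1 (hf.1 a2), ← hw y₂ z₄] at this
      exact this
    · rw [hk, finrank_map_inj g hgi]

theorem tripleIdx_graph_aux (n : ℕ) (f : CV n →ₗ[ℂ] CV n)
    (hw : ∀ x y, symForm n (f x) (f y) = symForm n x y)
    (Λ₁ Λ₂ Λ₃ Λ₄ : Submodule ℂ (CV n))
    (h₁ : IsLagrangian (symForm n) n Λ₁)
    (h₂ : IsLagrangian (symForm n) n Λ₂)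
    (h₃ : IsLagrangian (symForm n) n Λ₃)
    (h₄ : IsLagrangian (symForm n) n Λ₄) :
    tripleIdx (symForm2 n) (LinearMap.graph f) (Λ₁.prod Λ₂) (Λ₃.prod Λ₄)
    = tripleIdx (symForm n) (Λ₁.map f) Λ₂ Λ₄
      + tripleIdx (fun x y => - symForm n x y) (Λ₄.comap f) Λ₁ Λ₃
    ∧ tripleIdx (symForm2 n) (LinearMap.graph f) (Λ₁.prod Λ₂) (Λ₃.prod Λ₄)
    = tripleIdx (symForm n) (Λ₃.map f) Λ₂ Λ₄
      + tripleIdx (fun x y => - symForm n x y) (Λ₂.comap f) Λ₁ Λ₃ := by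
  have hinj : Function.Injective f := by
    rw [injective_iff_map_eq_zero]
    intro x hx
    apply symForm_nd n x
    intro y
    rw [← hw, hx]
    simp [symForm, herm]
  have hf : Function.Bijective f := ⟨hinj, LinearMap.injective_iff_surjective.1 hinj⟩
  have hdim : finrank ℂ (CV n) = 2 * n := by simp [two_mul]
  have hs : ∀ x y, symL n x y = - (starRingEnd ℂ) (symL n y x) := symForm_skew n
  have nd : ∀ x, (∀ y, symL n x y = 0) → x = 0 := symForm_nd n
  have hs' : ∀ x y, (-symL n) x y = - (starRingEnd ℂ) ((-symL n) y x) := by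
    intro x y
    simp only [LinearMap.neg_apply, map_neg]
    rw [hs x y]
  have nd' : ∀ x, (∀ y, (-symL n) x y = 0) → x = 0 := by
    intro x hx
    exact nd x fun y => neg_eq_zero.1 (hx y)
  have hneg : ∀ S : Submodule ℂ (CV n), orthL (-symL n) S = orthL (symL n) S := by
    intro S
    ext x
    simp [mem_orthL]
  have hlag : ∀ Λ : Submodule ℂ (CV n), IsLagrangian (symForm n) n Λ → orthL (symL n) Λ = Λ :=
    fun Λ h => lag_of (symL n) hs nd Λ h.1 (by rw [hdim, h.2])
  have hcom : ∀ Λ : Submodule ℂ (CV n), IsLagrangian (symForm n) n Λ →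
      IsLagrangian (symForm n) n (Λ.comap f) := by
    intro Λ h
    refine ⟨fun x hx y hy => ?_, ?_⟩
    · rw [← hw]; exact h.1 _ hx _ hy
    · rw [← finrank_map_inj f hinj, Submodule.map_comap_eq_of_surjective hf.2, h.2]
  have k₂ := hcom Λ₂ h₂
  have k₄ := hcom Λ₄ h₄
  obtain ⟨F, hF⟩ := exists_val (symL n) Λ₁ Λ₃ h₁.1 h₃.1
  obtain ⟨G, hG⟩ := exists_val (symL n) (Λ₂.comap f) (Λ₄.comap f) k₂.1 k₄.1
  have hq : ∀ x, ∀ y₁ ∈ Λ₁, ∀ z₃ ∈ Λ₃, ∀ y₂ ∈ Λ₂.comap f, ∀ z₄ ∈ Λ₄.comap f,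
      x = y₁ + z₃ → x = y₂ + z₄ →
      (fun x => (- F x + G x).re) x = (- symForm n y₁ z₃ + symForm n y₂ z₄).re := by
    intro x y₁ hy₁ z₃ hz₃ y₂ hy₂ z₄ hz₄ e1 e2
    have a1 := hF y₁ hy₁ z₃ hz₃
    have a2 := hG y₂ hy₂ z₄ hz₄
    rw [← e1] at a1
    rw [← e2] at a2
    simp only [a1, a2, symL_apply]
  rw [posInd_graph n f hf hw Λ₁ Λ₂ Λ₃ Λ₄ _ hq, tripleIdx_map f hf (symForm n) (symForm n) hw,
    tripleIdx_map f hf (symForm n) (symForm n) hw]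
  have c1 := core_add (symL n) hs nd Λ₁ (Λ₂.comap f) Λ₃ (Λ₄.comap f) (hlag _ h₁) (hlag _ k₂)
    (hlag _ h₃) (hlag _ k₄) _ hq
  have c2 := core_add (-symL n) hs' nd' (Λ₂.comap f) Λ₁ (Λ₄.comap f) Λ₃
    (by rw [hneg]; exact hlag _ k₂) (by rw [hneg]; exact hlag _ h₁)
    (by rw [hneg]; exact hlag _ k₄) (by rw [hneg]; exact hlag _ h₃) (fun x => (- F x + G x).re)
    (by
      intro x y₂ hy₂ z₄ hz₄ y₁ hy₁ z₃ hz₃ e2 e1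
      refine (hq x y₁ hy₁ z₃ hz₃ y₂ hy₂ z₄ hz₄ e1 e2).trans ?_
      congr 1
      simp only [LinearMap.neg_apply, symL_apply]
      ring)
  simp only [LinearMap.neg_apply, neg_neg] at c2
  simp only [symL_apply] at c1 c2
  have heta : (fun x y => symForm n x y) = symForm n := rfl
  rw [heta] at c1 c2
  set A₂ := Λ₂.comap f
  set A₄ := Λ₄.comap f
  unfold tripleIdx
  have s1 : (A₂ ⊔ A₄) ⊓ (Λ₁ ⊔ Λ₃) = (Λ₁ ⊔ Λ₃) ⊓ (A₂ ⊔ A₄) := inf_comm _ _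
  have s2 : A₂ ⊓ Λ₁ ⊓ A₄ ⊓ Λ₃ = Λ₁ ⊓ A₂ ⊓ Λ₃ ⊓ A₄ := by
    ext x; simp only [Submodule.mem_inf]; tauto
  have s4 : A₄ ⊓ Λ₃ = Λ₃ ⊓ A₄ := inf_comm _ _
  rw [s1, s2] at c2
  rw [s4]
  have t1 : finrank ℂ ↥(Λ₁ ⊓ A₂ ⊓ A₄) ≤ finrank ℂ ↥(Λ₁ ⊓ A₄) :=
    Submodule.finrank_mono (inf_le_inf_right _ inf_le_left)
  have t2 : finrank ℂ ↥(A₄ ⊓ Λ₁ ⊓ Λ₃) ≤ finrank ℂ ↥(Λ₃ ⊓ A₄) :=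
    Submodule.finrank_mono (fun x hx => ⟨hx.2, hx.1.1⟩)
  have t3 : finrank ℂ ↥(Λ₁ ⊓ A₂ ⊓ Λ₃ ⊓ A₄) ≤ finrank ℂ ↥(Λ₃ ⊓ A₄) :=
    Submodule.finrank_mono (inf_le_inf_right _ inf_le_right)
  have t4 : finrank ℂ ↥(Λ₃ ⊓ A₂ ⊓ A₄) ≤ finrank ℂ ↥(Λ₃ ⊓ A₄) :=
    Submodule.finrank_mono (inf_le_inf_right _ inf_le_left)
  have t5 : finrank ℂ ↥(A₂ ⊓ Λ₁ ⊓ Λ₃) ≤ finrank ℂ ↥(A₂ ⊓ Λ₃) :=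
    Submodule.finrank_mono (inf_le_inf_right _ inf_le_left)
  constructor
  · omega
  · omega

/-- `i(Gr(M), Λ₁⊕Λ₂, Λ₃⊕Λ₄) = i(MΛ₁, Λ₂, Λ₄) + i(M⁻¹Λ₄, Λ₁, Λ₃; −ω)`
`= i(MΛ₃, Λ₂, Λ₄) + i(M⁻¹Λ₂, Λ₁, Λ₃; −ω)` for `M ∈ Sp(2n)` and Lagrangian
subspaces `Λ₁, Λ₂, Λ₃, Λ₄` of `(ℂ^{2n}, ω)`. -/
theorem tripleIdx_graph_add (n : ℕ)
    (M : Matrix (Fin n ⊕ Fin n) (Fin n ⊕ Fin n) ℝ)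
    (hM : Mᵀ * Matrix.J (Fin n) ℝ * M = Matrix.J (Fin n) ℝ)
    (Λ₁ Λ₂ Λ₃ Λ₄ : Submodule ℂ (CV n))
    (h₁ : IsLagrangian (symForm n) n Λ₁)
    (h₂ : IsLagrangian (symForm n) n Λ₂)
    (h₃ : IsLagrangian (symForm n) n Λ₃)
    (h₄ : IsLagrangian (symForm n) n Λ₄) :
    tripleIdx (symForm2 n)
      (LinearMap.graph ((M.map Complex.ofReal).mulVecLin))
      (Λ₁.prod Λ₂) (Λ₃.prod Λ₄)
    = tripleIdx (symForm n) (Λ₁.map ((M.map Complex.ofReal).mulVecLin)) Λ₂ Λ₄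
      + tripleIdx (fun x y => - symForm n x y)
          (Λ₄.comap ((M.map Complex.ofReal).mulVecLin)) Λ₁ Λ₃
    ∧ tripleIdx (symForm2 n)
      (LinearMap.graph ((M.map Complex.ofReal).mulVecLin))
      (Λ₁.prod Λ₂) (Λ₃.prod Λ₄)
    = tripleIdx (symForm n) (Λ₃.map ((M.map Complex.ofReal).mulVecLin)) Λ₂ Λ₄
      + tripleIdx (fun x y => - symForm n x y)
          (Λ₂.comap ((M.map Complex.ofReal).mulVecLin)) Λ₁ Λ₃ := by
  exact tripleIdx_graph_aux n _ (symForm_inv n M hM) Λ₁ Λ₂ Λ₃ Λ₄ h₁ h₂ h₃ h₄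
end
end

section
/- Let Λ_s and Λ_e be Lagrangian subspaces of (ℂ^{2n}, ω) with n replaced by the half-dimension, i.e. Lagrangian subspaces of the complex symplectic space (ℂ^{2n}, ω) built from ℂ^n⊕ℂ^n. Then i(Gr(I_{2n}), Λ_s⊕Λ_e, Λ_D) = n − dim(Λ_s ∩ Λ^n_D) + i(Λ_s, Λ_e, Λ^n_D), where the left-hand triple index is computed in (ℂ^{2n}⊕ℂ^{2n}, −ω⊕ω) and the right-hand one in (ℂ^{2n}, ω). -/
open Matrix Module Submodule

noncomputable section

/-- `Λ^n_D = ℂ^n ⊕ {0}`, the Dirichlet Lagrangian (second block vanishes). -/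
def LnD (n : ℕ) : Submodule ℂ (CV n) :=
  LinearMap.ker (LinearMap.funLeft ℂ ℂ (Sum.inr : Fin n → Fin n ⊕ Fin n))

/-- `Λ^n_N = {0} ⊕ ℂ^n`, the Neumann Lagrangian (first block vanishes). -/
def LnN (n : ℕ) : Submodule ℂ (CV n) :=
  LinearMap.ker (LinearMap.funLeft ℂ ℂ (Sum.inl : Fin n → Fin n ⊕ Fin n))

/-- `Λ_D = Λ^n_D ⊕ Λ^n_D ⊂ ℂ^{4n}`. -/
def LD (n : ℕ) : Submodule ℂ (CV n × CV n) := (LnD n).prod (LnD n)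

/-- `Λ_N = Λ^n_N ⊕ Λ^n_N ⊂ ℂ^{4n}`. -/
def LN (n : ℕ) : Submodule ℂ (CV n × CV n) := (LnN n).prod (LnN n)

theorem symForm_eq (n : ℕ) (x y : CV n) : symForm n x y =
    ∑ i, (-(x (Sum.inr i) * (starRingEnd ℂ) (y (Sum.inl i)))
      + x (Sum.inl i) * (starRingEnd ℂ) (y (Sum.inr i))) := by
  simp only [symForm, herm, Fintype.sum_sum_type, Finset.sum_add_distrib, Matrix.J,
    Matrix.fromBlocks_mulVec]
  simp [Matrix.neg_mulVec]

theorem symForm_add_left (n : ℕ) (x x' y : CV n) :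
    symForm n (x + x') y = symForm n x y + symForm n x' y := by
  simp only [symForm_eq, ← Finset.sum_add_distrib]
  refine Finset.sum_congr rfl fun i _ => ?_
  simp only [Pi.add_apply]
  ring

theorem symForm_add_right (n : ℕ) (x y y' : CV n) :
    symForm n x (y + y') = symForm n x y + symForm n x y' := by
  simp only [symForm_eq, ← Finset.sum_add_distrib]
  refine Finset.sum_congr rfl fun i _ => ?_
  simp only [Pi.add_apply, map_add]
  ring

theorem mem_LnD (n : ℕ) (x : CV n) : x ∈ LnD n ↔ ∀ i, x (Sum.inr i) = 0 := by
  simp [LnD, funext_iff, LinearMap.funLeft_apply]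

theorem symForm_LnD (n : ℕ) (x y : CV n) (hx : x ∈ LnD n) (hy : y ∈ LnD n) :
    symForm n x y = 0 := by
  rw [mem_LnD] at hx hy
  simp [symForm_eq, hx, hy]

theorem finrank_LnD (n : ℕ) : Module.finrank ℂ (LnD n) = n := by
  have h := LinearMap.finrank_range_add_finrank_ker
    (LinearMap.funLeft ℂ ℂ (Sum.inr : Fin n → Fin n ⊕ Fin n))
  rw [LinearMap.range_eq_top.mpr
    (LinearMap.funLeft_surjective_of_injective ℂ ℂ _ Sum.inr_injective)] at h
  simp at h
  exact h

/-- The diagonal embedding. -/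
def diagMap (n : ℕ) : CV n →ₗ[ℂ] CV n × CV n := LinearMap.prod LinearMap.id LinearMap.id

theorem diagMap_inj (n : ℕ) : Function.Injective (diagMap n) := fun x y h => by
  simpa [diagMap] using h

theorem finrank_diag (n : ℕ) (S : Submodule ℂ (CV n)) :
    Module.finrank ℂ (S.map (diagMap n)) = Module.finrank ℂ S :=
  (Submodule.equivMapOfInjective (diagMap n) (diagMap_inj n) S).finrank_eq.symm

theorem graph_inf_prod (n : ℕ) (A B : Submodule ℂ (CV n)) :
    LinearMap.graph (LinearMap.id : CV n →ₗ[ℂ] CV n) ⊓ A.prod B = (A ⊓ B).map (diagMap n) := by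
  ext ⟨x, y⟩
  simp only [Submodule.mem_inf, LinearMap.mem_graph_iff, Submodule.mem_prod, Submodule.mem_map,
    diagMap, LinearMap.prod_apply, LinearMap.id_apply, Function.prod, Prod.mk.injEq]
  constructor
  · rintro ⟨rfl, h⟩
    exact ⟨_, h, rfl, rfl⟩
  · rintro ⟨z, h, rfl, rfl⟩
    exact ⟨rfl, h⟩

theorem posInd_eq (n : ℕ) (Λs Λe : Submodule ℂ (CV n))
    (hs : ∀ x ∈ Λs, ∀ y ∈ Λs, symForm n x y = 0) :
    posInd (symForm2 n) (LinearMap.graph (LinearMap.id : CV n →ₗ[ℂ] CV n))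
      (Λs.prod Λe) (LD n) = posInd (symForm n) Λs Λe (LnD n) := by
  unfold posInd
  congr 1
  ext k
  simp only [Set.mem_ofPred_eq]
  constructor
  · rintro ⟨P, hP, hpos, rfl⟩
    -- every element of `P` is a diagonal pair with two decompositions
    have hdec : ∀ p ∈ P, p.1 = p.2 ∧ p.1 ∈ Λs ⊔ LnD n ∧ p.1 ∈ Λe ⊔ LnD n := by
      intro p hp
      obtain ⟨h1, h2⟩ := hP hp
      have h1 : p.2 = p.1 := by simpa [LinearMap.mem_graph_iff] using h1
      obtain ⟨y, hy, z, hz, h⟩ := Submodule.mem_sup.mp h2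
      refine ⟨h1.symm, Submodule.mem_sup.mpr ⟨y.1, hy.1, z.1, hz.1, by rw [← h]; rfl⟩, ?_⟩
      rw [← h1]
      exact Submodule.mem_sup.mpr ⟨y.2, hy.2, z.2, hz.2, by rw [← h]; rfl⟩
    -- linear section
    let g : (Λs × LnD n) →ₗ[ℂ] CV n := Λs.subtype.coprod (LnD n).subtype
    have hg : LinearMap.range g = Λs ⊔ LnD n := by
      simp [g, LinearMap.range_coprod]
    obtain ⟨r, hr⟩ := g.rangeRestrict.exists_rightInverse_of_surjective g.range_rangeRestrict
    let i : P →ₗ[ℂ] LinearMap.range g :=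
      ((LinearMap.fst ℂ (CV n) (CV n)).comp P.subtype).codRestrict _ (fun p => by
        rw [hg]; exact (hdec p.1 p.2).2.1)
    let f : P →ₗ[ℂ] CV n := (Λs.subtype.comp (LinearMap.fst ℂ _ _)).comp (r.comp i)
    have hf : ∀ p : P, f p ∈ Λs ∧ ∃ d ∈ LnD n, p.1.1 = f p + d := by
      intro p
      refine ⟨(r (i p)).1.2, (r (i p)).2, (r (i p)).2.2, ?_⟩
      have h := congrArg Subtype.val (LinearMap.congr_fun hr (i p))
      exact h.symm
    have key : ∀ p : P, p ≠ 0 → ∀ e ∈ Λe, ∀ d ∈ LnD n, f p = e + d →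
        0 < (symForm n e d).re := by
      intro p hp e he d hd h
      obtain ⟨hfs, d1, hd1, h1⟩ := hf p
      have h2 := (hdec p.1 p.2).1
      have := hpos p.1 p.2 (fun h => hp (Subtype.ext h)) (f p, e) ⟨hfs, he⟩ (d1, d + d1)
        ⟨hd1, (LnD n).add_mem hd hd1⟩ (by
          refine Prod.ext h1 ?_
          rw [← h2, h1, h]; simp [add_assoc])
      have hc : symForm2 n (f p, e) (d1, d + d1) = symForm n e d := by
        simp only [symForm2]
        rw [h, symForm_add_left, symForm_add_right, symForm_LnD n d d1 hd hd1]
        ring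
      rwa [hc] at this
    have hinj : Function.Injective f := by
      rw [← LinearMap.ker_eq_bot, LinearMap.ker_eq_bot']
      intro p hp
      by_contra hne
      have := key p hne 0 Λe.zero_mem 0 (LnD n).zero_mem (by simpa using hp)
      rw [symForm_LnD n 0 0 (LnD n).zero_mem (LnD n).zero_mem] at this
      simp at this
    refine ⟨LinearMap.range f, ?_, ?_, (LinearMap.finrank_range_of_inj hinj).symm⟩
    · rintro _ ⟨p, rfl⟩
      obtain ⟨hfs, d1, hd1, h1⟩ := hf p
      refine ⟨hfs, ?_⟩
      have : f p = p.1.1 - d1 := by rw [h1]; simp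
      rw [this]
      exact Submodule.sub_mem _ (hdec p.1 p.2).2.2 (Submodule.mem_sup_right hd1)
    · rintro _ ⟨p, rfl⟩ hne e he d hd h
      exact key p (fun h => hne (by simp [h])) e he d hd h
  · rintro ⟨P, hP, hpos, rfl⟩
    refine ⟨P.map (diagMap n), ?_, ?_, (finrank_diag n P).symm⟩
    · rintro _ ⟨x, hx, rfl⟩
      obtain ⟨h1, h2⟩ := hP hx
      obtain ⟨e, he, d, hd, h⟩ := Submodule.mem_sup.mp h2
      refine ⟨by simp [diagMap, LinearMap.mem_graph_iff], ?_⟩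
      refine Submodule.mem_sup.mpr ⟨(x, e), ⟨h1, he⟩, (0, d), ⟨(LnD n).zero_mem, hd⟩, ?_⟩
      simp [diagMap, h]
    · rintro _ ⟨x, hx, rfl⟩ hne ⟨s, e⟩ ⟨hs', he⟩ ⟨d1, d2⟩ ⟨hd1, hd2⟩ h
      have hx0 : x ≠ 0 := fun h => hne (by simp [h])
      have e1 : x = s + d1 := congrArg Prod.fst h
      have e2 : x = e + d2 := congrArg Prod.snd h
      have hd1s : d1 ∈ Λs := by
        have : d1 = x - s := by rw [e1]; simp
        rw [this]
        exact Λs.sub_mem (hP hx).1 hs'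
      have := hpos x hx hx0 e he d2 hd2 e2
      have hc : symForm2 n (s, e) (d1, d2) = symForm n e d2 := by
        simp only [symForm2]
        rw [hs s hs' d1 hd1s]; simp
      rwa [hc]

/-- For separated boundary conditions:
`i(Gr(I_{2n}), Λ_s⊕Λ_e, Λ_D) = n − dim(Λ_s ∩ Λ^n_D) + i(Λ_s, Λ_e, Λ^n_D)`. -/
theorem tripleIdx_graph_id_separated (n : ℕ)
    (Λs Λe : Submodule ℂ (CV n))
    (hs : IsLagrangian (symForm n) n Λs)
    (he : IsLagrangian (symForm n) n Λe) :
    tripleIdx (symForm2 n)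
      (LinearMap.graph (LinearMap.id : CV n →ₗ[ℂ] CV n))
      (Λs.prod Λe) (LD n)
    = n - Module.finrank ℂ ↥(Λs ⊓ LnD n)
      + tripleIdx (symForm n) Λs Λe (LnD n) := by
  have h1 : LinearMap.graph (LinearMap.id : CV n →ₗ[ℂ] CV n) ⊓ LD n
      = (LnD n).map (diagMap n) := by
    rw [LD, graph_inf_prod, inf_idem]
  have h2 : LinearMap.graph (LinearMap.id : CV n →ₗ[ℂ] CV n) ⊓ Λs.prod Λe ⊓ LD n
      = (Λs ⊓ Λe ⊓ LnD n).map (diagMap n) := by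
    rw [LD, inf_assoc, Submodule.prod_inf_prod, graph_inf_prod, ← inf_inf_distrib_right]
  have h3 : Module.finrank ℂ ↥(Λs ⊓ LnD n) ≤ n :=
    (Submodule.finrank_mono inf_le_right).trans (finrank_LnD n).le
  have h4 : Module.finrank ℂ ↥(Λs ⊓ Λe ⊓ LnD n) ≤ Module.finrank ℂ ↥(Λs ⊓ LnD n) :=
    Submodule.finrank_mono (inf_le_inf_right _ inf_le_left)
  unfold tripleIdx
  rw [posInd_eq n Λs Λe hs.1, h1, h2, finrank_diag, finrank_diag, finrank_LnD]
  omega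
end
end
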